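/- (Inductive step) Let C = 2¹⁵. For every η₀ ∈ (0, 1/2] and every L₀ ≥ 0, statement B(η₀, C⁻¹η₀², L₀) implies statement A(η₀ − C⁻¹η₀², C³η₀⁻⁴ max{L₀, 1}, C⁻¹η₀²). -/

import Mathlib

open Real Pointwise

noncomputable section

abbrev Fvec (n : ℕ) : Type := Fin n → ZMod 2

/-- Shannon entropy (natural log) of a finitely supported distribution. -/
def ent {A : Type*} (p : A → ℝ) : ℝ := ∑ᶠ a, Real.negMulLog (p a)

/-- `p` is a (finitely supported) probability distribution. -/
def IsDist {A : Type*} (p : A → ℝ) : Prop := (∀ a, 0 ≤ p a) ∧ ∑ᶠ a, p a = 1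

/-- Pushforward of a distribution along a map: the distribution of `f(X)` for `X ∼ p`. -/
def push {A B : Type*} (f : A → B) (p : A → ℝ) : B → ℝ := fun b => ∑ᶠ a ∈ f ⁻¹' {b}, p a

/-- Joint distribution of a pair of independent random variables. -/
def prodDist {A B : Type*} (p : A → ℝ) (q : B → ℝ) : A × B → ℝ := fun z => p z.1 * q z.2

/-- Distribution of `X + Y` for independent `X ∼ p`, `Y ∼ q`. -/
def conv {A : Type*} [AddGroup A] (p q : A → ℝ) : A → ℝ := fun z => ∑ᶠ x, p x * q (z - x)

/-- The distribution of `X` conditioned on `U = b`, where `r` is the joint distribution of `(X, U)`. -/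
def fiber {A B : Type*} (r : A × B → ℝ) (b : B) : A → ℝ := fun a => r (a, b) / push Prod.snd r b

/-- Conditional entropy `H[X | U]` of a joint distribution `r` of `(X, U)`. -/
def condEnt {A B : Type*} (r : A × B → ℝ) : ℝ := ∑ᶠ b, push Prod.snd r b * ent (fiber r b)

/-- Doubling mass `s[X ; Y]` (of independent copies with distributions `p`, `q`). -/
def sDouble {A : Type*} [AddGroup A] (p q : A → ℝ) : ℝ := ent p + ent q - ent (conv p q)

/-- Conditional doubling mass `s[X | U ; Y | W] = 𝔼_{u ∼ U, w ∼ W} s[X_u ; Y_w]`,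
where `r1`, `r2` are the joint distributions of `(X, U)` and `(Y, W)`. -/
def sCond {A U W : Type*} [AddGroup A] (r1 : A × U → ℝ) (r2 : A × W → ℝ) : ℝ :=
  ∑ᶠ u, ∑ᶠ w, push Prod.snd r1 u * push Prod.snd r2 w * sDouble (fiber r1 u) (fiber r2 w)

/-- Conditional mutual information `I[A : B | S]` of a joint distribution of `(A, B, S)`. -/
def condMI {A B S : Type*} (r : A × B × S → ℝ) : ℝ :=
  ent (push (fun z => (z.1, z.2.2)) r) + ent (push (fun z => z.2) r)
    - ent r - ent (push (fun z => z.2.2) r)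

/-- Uniform distribution on a set. -/
def unifOn {A : Type*} (s : Set A) : A → ℝ := s.indicator fun _ => (Nat.card s : ℝ)⁻¹

/-- Entropic Ruzsa distance `d[X ; Y]`. -/
def dRuzsa {A : Type*} [AddGroup A] (p q : A → ℝ) : ℝ := ent (conv p q) - ent p / 2 - ent q / 2

/-- Joint distribution of `(X, X + Y)` for independent `X ∼ p`, `Y ∼ q`. -/
def jointSum {A : Type*} [AddGroup A] (p q : A → ℝ) : A × A → ℝ :=
  push (fun z : A × A => (z.1, z.1 + z.2)) (prodDist p q)

/-- Joint distribution of `(X, π_V(X))`. -/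
def selfProj {n : ℕ} (V : Submodule (ZMod 2) (Fvec n)) (p : Fvec n → ℝ) :
    Fvec n × (Fvec n ⧸ V) → ℝ := push (fun x => (x, V.mkQ x)) p

/-- Joint distribution of independent `(X₁, X₂, Y₁, Y₂)` with `X₁, X₂ ∼ p` and `Y₁, Y₂ ∼ q`. -/
def quad {A : Type*} (p q : A → ℝ) : A × A × A × A → ℝ :=
  fun z => p z.1 * p z.2.1 * q z.2.2.1 * q z.2.2.2

/-- Distribution of `X₁ + ⋯ + X_k` for independent `Xᵢ ∼ p i`. -/
def indepSum {A : Type*} [AddCommGroup A] (k : ℕ) (p : Fin k → A → ℝ) : A → ℝ :=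
  push (fun x : Fin k → A => ∑ i, x i) (fun x => ∏ i, p i (x i))

/-- Statement `A(η, L, c)` from the paper. -/
def StA (η L c : ℝ) : Prop :=
  ∀ (n : ℕ) (p q : Fvec n → ℝ), IsDist p → IsDist q →
    ent (conv p q) ≤ (1 - η) * (ent p + ent q) →
    ∃ V : Submodule (ZMod 2) (Fvec n),
      ent (unifOn (V : Set (Fvec n))) ≤ L * (ent p + ent q) ∧
      ent (push V.mkQ p) + ent (push V.mkQ q) ≤ (1 - c) * (ent p + ent q)

/-- Statement `B(η, ε, L)` from the paper. -/
def StB (η ε L : ℝ) : Prop :=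
  ∀ (n : ℕ) (p q : Fvec n → ℝ), IsDist p → IsDist q →
    ∃ V : Submodule (ZMod 2) (Fvec n),
      ent (unifOn (V : Set (Fvec n))) ≤ L * (ent p + ent q) ∧
      ent (conv (push V.mkQ p) (push V.mkQ q)) ≥
        (1 - η) * (ent (push V.mkQ p) + ent (push V.mkQ q)) - ε * (ent p + ent q)




open scoped Classical in
/-- mass of the fibre of `X` through `ω` -/
def prb {Ω A : Type*} [Fintype Ω] (P : Ω → ℝ) (X : Ω → A) (ω : Ω) : ℝ :=
  ∑ ω', if X ω' = X ω then P ω' else 0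

/-- homogeneous entropy of the variable `X` for the (unnormalised) weight `P`. -/
def Hn {Ω A : Type*} [Fintype Ω] (P : Ω → ℝ) (X : Ω → A) : ℝ :=
  ∑ ω, P ω * (Real.log (∑ ω', P ω') - Real.log (prb P X ω))

set_option linter.unusedSectionVars false

section core
variable {Ω A B C D : Type*} [Fintype Ω]

theorem Hn_congr {P : Ω → ℝ} {X : Ω → A} {Y : Ω → B}
    (h : ∀ ω ω', X ω = X ω' ↔ Y ω = Y ω') : Hn P X = Hn P Y := by
  classical
  have : ∀ ω, prb P X ω = prb P Y ω := fun ω =>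
    Finset.sum_congr rfl fun ω' _ => by simp only [h ω' ω]
  unfold Hn
  simp only [this]

theorem prb_val {P : Ω → ℝ} {X : Ω → A} {ω ω' : Ω} (h : X ω = X ω') : prb P X ω = prb P X ω' := by
  unfold prb
  rw [h]

theorem prb_nonneg {P : Ω → ℝ} (hP : 0 ≤ P) (X : Ω → A) (ω : Ω) : 0 ≤ prb P X ω := by
  unfold prb
  refine Finset.sum_nonneg fun i _ => ?_
  split_ifs
  · exact hP i
  · exact le_rfl

theorem le_prb {P : Ω → ℝ} (hP : 0 ≤ P) (X : Ω → A) (ω : Ω) : P ω ≤ prb P X ω := by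
  classical
  unfold prb
  have := Finset.single_le_sum (f := fun ω' => if X ω' = X ω then P ω' else 0) (s := Finset.univ)
    (fun i _ => by split_ifs; exacts [hP i, le_rfl]) (Finset.mem_univ ω)
  simpa using this

theorem prb_le_sum {P : Ω → ℝ} (hP : 0 ≤ P) (X : Ω → A) (ω : Ω) : prb P X ω ≤ ∑ ω', P ω' := by
  unfold prb
  refine Finset.sum_le_sum fun i _ => ?_
  split_ifs
  · exact le_rfl
  · exact hP i

theorem prb_mono {P : Ω → ℝ} (hP : 0 ≤ P) {X : Ω → A} {Y : Ω → B}
    (h : ∀ ω ω', X ω = X ω' → Y ω = Y ω') (ω : Ω) : prb P X ω ≤ prb P Y ω := by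
  unfold prb
  refine Finset.sum_le_sum fun i _ => ?_
  by_cases h1 : X i = X ω
  · simp [h1, h _ _ h1]
  · rw [if_neg h1]; split_ifs; exacts [hP i, le_rfl]

theorem Hn_mono {P : Ω → ℝ} (hP : 0 ≤ P) {X : Ω → A} {Y : Ω → B}
    (h : ∀ ω ω', X ω = X ω' → Y ω = Y ω') : Hn P Y ≤ Hn P X := by
  unfold Hn
  refine Finset.sum_le_sum fun ω _ => ?_
  rcases (hP ω).eq_or_lt with h0 | h0
  · simp only [Pi.zero_apply] at h0; simp [← h0]
  · have h0' : 0 < P ω := h0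
    have h1 : 0 < prb P X ω := lt_of_lt_of_le h0' (le_prb hP X ω)
    have := Real.log_le_log h1 (prb_mono hP h ω)
    exact mul_le_mul_of_nonneg_left (by linarith) h0'.le

theorem Hn_const (P : Ω → ℝ) {X : Ω → A} (h : ∀ ω ω', X ω = X ω') : Hn P X = 0 := by
  unfold Hn prb
  refine Finset.sum_eq_zero fun ω _ => ?_
  have : ∀ ω', (X ω' = X ω) = True := fun ω' => by simp [h ω' ω]
  simp [this]

theorem Hn_nonneg {P : Ω → ℝ} (hP : 0 ≤ P) (X : Ω → A) : 0 ≤ Hn P X := by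
  rw [← Hn_const (X := fun _ : Ω => ()) P (by simp)]
  exact Hn_mono hP (by simp)

theorem Hn_zero (X : Ω → A) : Hn (0 : Ω → ℝ) X = 0 := by simp [Hn]

theorem Hn_smul {P : Ω → ℝ} (hP : 0 ≤ P) {c : ℝ} (hc : 0 ≤ c) (X : Ω → A) :
    Hn (fun ω => c * P ω) X = c * Hn P X := by
  rcases hc.eq_or_lt with rfl | hc
  · simp [Hn]
  unfold Hn
  rw [Finset.mul_sum]
  refine Finset.sum_congr rfl fun ω _ => ?_
  rcases (hP ω).eq_or_lt with h0 | h0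
  · simp only [Pi.zero_apply] at h0; simp [← h0]
  have h0' : 0 < P ω := h0
  have h1 : 0 < prb P X ω := lt_of_lt_of_le h0' (le_prb hP X ω)
  have h2 : 0 < ∑ ω', P ω' := lt_of_lt_of_le h1 (prb_le_sum hP X ω)
  have h3 : prb (fun ω => c * P ω) X ω = c * prb P X ω := by
    unfold prb; rw [Finset.mul_sum]; simp
  rw [h3, ← Finset.mul_sum, Real.log_mul hc.ne' h1.ne', Real.log_mul hc.ne' h2.ne']
  ring

/-- core submodularity -/
theorem Hn_submod {P : Ω → ℝ} (hP : 0 ≤ P) (X : Ω → A) (Y : Ω → B) (Z : Ω → C) :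
    Hn P (fun ω => (X ω, Y ω, Z ω)) + Hn P Z
      ≤ Hn P (fun ω => (X ω, Z ω)) + Hn P (fun ω => (Y ω, Z ω)) := by
  classical
  set XYZ : Ω → A × B × C := fun ω => (X ω, Y ω, Z ω) with hXYZ
  set XZ : Ω → A × C := fun ω => (X ω, Z ω) with hXZ
  set YZ : Ω → B × C := fun ω => (Y ω, Z ω) with hYZ
  have key : ∑ ω, P ω * (prb P XZ ω * prb P YZ ω / (prb P XYZ ω * prb P Z ω)) ≤ ∑ ω, P ω := by
    have e1 : ∀ ω, P ω * (prb P XZ ω * prb P YZ ω / (prb P XYZ ω * prb P Z ω))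
        = ∑ a, ∑ b, (if XZ a = XZ ω ∧ YZ b = YZ ω then
            P a * P b * (P ω / (prb P XYZ ω * prb P Z ω)) else 0) := by
      intro ω
      have : prb P XZ ω * prb P YZ ω = ∑ a, ∑ b, (if XZ a = XZ ω ∧ YZ b = YZ ω then
            P a * P b else 0) := by
        unfold prb
        rw [Finset.sum_mul_sum]
        refine Finset.sum_congr rfl fun a _ => Finset.sum_congr rfl fun b _ => ?_
        by_cases h1 : XZ a = XZ ω <;> by_cases h2 : YZ b = YZ ω <;> simp [h1, h2]
      calc _ = (prb P XZ ω * prb P YZ ω) * (P ω / (prb P XYZ ω * prb P Z ω)) := by ring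
        _ = _ := by
          rw [this, Finset.sum_mul]
          refine Finset.sum_congr rfl fun a _ => ?_
          rw [Finset.sum_mul]
          refine Finset.sum_congr rfl fun b _ => ?_
          split_ifs <;> ring
    calc _ = ∑ ω, ∑ a, ∑ b, (if XZ a = XZ ω ∧ YZ b = YZ ω then
            P a * P b * (P ω / (prb P XYZ ω * prb P Z ω)) else 0) :=
          Finset.sum_congr rfl fun ω _ => e1 ω
      _ = ∑ a, ∑ b, ∑ ω, (if XZ a = XZ ω ∧ YZ b = YZ ω then
            P a * P b * (P ω / (prb P XYZ ω * prb P Z ω)) else 0) := by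
          rw [Finset.sum_comm]
          refine Finset.sum_congr rfl fun a _ => ?_
          rw [Finset.sum_comm]
      _ ≤ ∑ a, ∑ b, (if Z b = Z a then P a * P b / prb P Z a else 0) := by
          refine Finset.sum_le_sum fun a _ => Finset.sum_le_sum fun b _ => ?_
          by_cases hex : ∃ ω₀, XZ a = XZ ω₀ ∧ YZ b = YZ ω₀
          · obtain ⟨ω₀, h1, h2⟩ := hex
            simp only [hXZ, hYZ, Prod.mk.injEq] at h1 h2
            have hz : Z b = Z a := by rw [h2.2, h1.2]
            rw [if_pos hz]
            have e2 : ∀ ω, (if XZ a = XZ ω ∧ YZ b = YZ ω then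
              P a * P b * (P ω / (prb P XYZ ω * prb P Z ω)) else 0)
              = (P a * P b / prb P Z a) * (1 / prb P XYZ ω₀) * (if XYZ ω = XYZ ω₀ then P ω else 0) := by
              intro ω
              by_cases h : XZ a = XZ ω ∧ YZ b = YZ ω
              · rw [if_pos h]
                simp only [hXZ, hYZ, Prod.mk.injEq] at h
                have hx : XYZ ω = XYZ ω₀ := by
                  simp only [hXYZ, Prod.mk.injEq]
                  exact ⟨by rw [← h.1.1, h1.1], by rw [← h.2.1, h2.1], by rw [← h.1.2, h1.2]⟩
                rw [if_pos hx]
                have p1 : prb P XYZ ω = prb P XYZ ω₀ := prb_val hx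
                have p2 : prb P Z ω = prb P Z a := prb_val h.1.2.symm
                rw [p1, p2]
                ring
              · rw [if_neg h]
                have hx : ¬ XYZ ω = XYZ ω₀ := by
                  intro hx
                  simp only [hXYZ, Prod.mk.injEq] at hx
                  apply h
                  simp only [hXZ, hYZ, Prod.mk.injEq]
                  exact ⟨⟨by rw [h1.1, hx.1], by rw [h1.2, hx.2.2]⟩,
                    by rw [h2.1, hx.2.1], by rw [h2.2, hx.2.2]⟩
                rw [if_neg hx]; ring
            rw [Finset.sum_congr rfl fun ω _ => e2 ω, ← Finset.mul_sum]
            have e3 : ∑ ω, (if XYZ ω = XYZ ω₀ then P ω else 0) = prb P XYZ ω₀ := by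
              unfold prb; exact Finset.sum_congr rfl fun _ _ => by congr
            rw [e3, mul_assoc]
            have q1 : 0 ≤ P a * P b / prb P Z a :=
              div_nonneg (mul_nonneg (hP a) (hP b)) (prb_nonneg hP _ _)
            have q2 : 1 / prb P XYZ ω₀ * prb P XYZ ω₀ ≤ 1 := by
              rcases eq_or_ne (prb P XYZ ω₀) 0 with h | h
              · rw [h]; norm_num
              · rw [one_div, inv_mul_cancel₀ h]
            nlinarith
          · push Not at hex
            rw [Finset.sum_eq_zero]
            · split_ifs
              · exact div_nonneg (mul_nonneg (hP a) (hP b)) (prb_nonneg hP _ _)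
              · exact le_rfl
            · intro ω _
              rw [if_neg]
              rintro ⟨h1, h2⟩
              exact hex ω h1 h2
      _ ≤ ∑ a, P a := by
          refine Finset.sum_le_sum fun a _ => ?_
          have : ∑ b, (if Z b = Z a then P a * P b / prb P Z a else 0)
              = P a / prb P Z a * prb P Z a := by
            conv_rhs => enter [2]; rw [prb]
            rw [Finset.mul_sum]
            refine Finset.sum_congr rfl fun b _ => ?_
            split_ifs
            · ring
            · ring
          rw [this]
          rcases eq_or_ne (prb P Z a) 0 with h | h
          · rw [h]; simpa using hP a
          · rw [div_mul_cancel₀ _ h]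
  have key2 : ∀ ω, P ω * (Real.log (prb P XZ ω) + Real.log (prb P YZ ω)
      - Real.log (prb P XYZ ω) - Real.log (prb P Z ω)) ≤
      P ω * (prb P XZ ω * prb P YZ ω / (prb P XYZ ω * prb P Z ω)) - P ω := by
    intro ω
    rcases (hP ω).eq_or_lt with h0 | h0
    · simp only [Pi.zero_apply] at h0; simp [← h0]
    have h0' : 0 < P ω := h0
    have a1 : 0 < prb P XZ ω := lt_of_lt_of_le h0' (le_prb hP _ ω)
    have a2 : 0 < prb P YZ ω := lt_of_lt_of_le h0' (le_prb hP _ ω)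
    have a3 : 0 < prb P XYZ ω := lt_of_lt_of_le h0' (le_prb hP _ ω)
    have a4 : 0 < prb P Z ω := lt_of_lt_of_le h0' (le_prb hP _ ω)
    have := Real.log_le_sub_one_of_pos (x := prb P XZ ω * prb P YZ ω / (prb P XYZ ω * prb P Z ω))
      (by positivity)
    rw [Real.log_div (by positivity) (by positivity), Real.log_mul a1.ne' a2.ne',
      Real.log_mul a3.ne' a4.ne'] at this
    have := mul_le_mul_of_nonneg_left this h0'.le
    linarith
  have key3 := Finset.sum_le_sum fun ω (_ : ω ∈ Finset.univ) => key2 ω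
  rw [Finset.sum_sub_distrib] at key3
  have e4 : Hn P XYZ + Hn P Z - (Hn P XZ + Hn P YZ) = ∑ ω, P ω * (Real.log (prb P XZ ω) + Real.log (prb P YZ ω)
      - Real.log (prb P XYZ ω) - Real.log (prb P Z ω)) := by
    unfold Hn
    rw [← Finset.sum_add_distrib, ← Finset.sum_add_distrib, ← Finset.sum_sub_distrib]
    refine Finset.sum_congr rfl fun ω _ => ?_
    ring
  linarith

/-- kernel form of submodularity -/
theorem Hn_sub {P : Ω → ℝ} (hP : 0 ≤ P) (X : Ω → A) (Y : Ω → B) (Z : Ω → C) (W : Ω → D)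
    (hX : ∀ ω ω', X ω = X ω' → Z ω = Z ω') (hY : ∀ ω ω', Y ω = Y ω' → Z ω = Z ω')
    (hW : ∀ ω ω', X ω = X ω' → Y ω = Y ω' → W ω = W ω') :
    Hn P W + Hn P Z ≤ Hn P X + Hn P Y := by
  have h := Hn_submod hP X Y Z
  have h1 : Hn P (fun ω => (X ω, Z ω)) = Hn P X := Hn_congr fun ω ω' => by
    simp only [Prod.mk.injEq]; exact ⟨fun h => h.1, fun h => ⟨h, hX _ _ h⟩⟩
  have h2 : Hn P (fun ω => (Y ω, Z ω)) = Hn P Y := Hn_congr fun ω ω' => by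
    simp only [Prod.mk.injEq]; exact ⟨fun h => h.1, fun h => ⟨h, hY _ _ h⟩⟩
  have h3 : Hn P W ≤ Hn P (fun ω => (X ω, Y ω, Z ω)) := Hn_mono hP fun ω ω' => by
    simp only [Prod.mk.injEq]; exact fun h => hW _ _ h.1 h.2.1
  linarith

/-- subadditivity -/
theorem Hn_subadd {P : Ω → ℝ} (hP : 0 ≤ P) (X : Ω → A) (Y : Ω → B) (W : Ω → D)
    (hW : ∀ ω ω', X ω = X ω' → Y ω = Y ω' → W ω = W ω') :
    Hn P W ≤ Hn P X + Hn P Y := by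
  have := Hn_sub hP X Y (fun _ => ()) W (by simp) (by simp) hW
  rw [Hn_const (X := fun _ : Ω => ()) P (by simp)] at this
  linarith

variable {Ω₁ Ω₂ : Type*} [Fintype Ω₁] [Fintype Ω₂]

/-- product weight -/
def pw {Ω₁ Ω₂ : Type*} (p : Ω₁ → ℝ) (q : Ω₂ → ℝ) : Ω₁ × Ω₂ → ℝ := fun z => p z.1 * q z.2

theorem pw_nonneg {p : Ω₁ → ℝ} {q : Ω₂ → ℝ} (hp : 0 ≤ p) (hq : 0 ≤ q) : 0 ≤ pw p q :=
  fun z => mul_nonneg (hp z.1) (hq z.2)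

theorem sum_pw (p : Ω₁ → ℝ) (q : Ω₂ → ℝ) : ∑ z, pw p q z = (∑ x, p x) * ∑ y, q y := by
  rw [Fintype.sum_prod_type, Finset.sum_mul_sum]
  rfl

theorem Hn_prod {p : Ω₁ → ℝ} {q : Ω₂ → ℝ} (hp : 0 ≤ p) (hq : 0 ≤ q) (f : Ω₁ → A) (g : Ω₂ → B) :
    Hn (pw p q) (fun z => (f z.1, g z.2)) = (∑ y, q y) * Hn p f + (∑ x, p x) * Hn q g := by
  classical
  have h1 : ∀ z : Ω₁ × Ω₂, prb (pw p q) (fun z => (f z.1, g z.2)) z = prb p f z.1 * prb q g z.2 := by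
    intro z
    unfold prb
    rw [Fintype.sum_prod_type, Finset.sum_mul_sum]
    refine Finset.sum_congr rfl fun a _ => Finset.sum_congr rfl fun b _ => ?_
    by_cases h1 : f a = f z.1 <;> by_cases h2 : g b = g z.2 <;> simp [h1, h2, pw]
  unfold Hn
  rw [sum_pw]
  have h2 : ∀ z : Ω₁ × Ω₂, pw p q z * (Real.log ((∑ x, p x) * ∑ y, q y)
      - Real.log (prb (pw p q) (fun z => (f z.1, g z.2)) z)) =
      q z.2 * (p z.1 * (Real.log (∑ x, p x) - Real.log (prb p f z.1))) +
      p z.1 * (q z.2 * (Real.log (∑ x, q x) - Real.log (prb q g z.2))) := by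
    intro z
    rw [h1]
    rcases (hp z.1).eq_or_lt with h0 | h0
    · simp only [Pi.zero_apply] at h0; simp [pw, ← h0]
    rcases (hq z.2).eq_or_lt with h0' | h0'
    · simp only [Pi.zero_apply] at h0'; simp [pw, ← h0']
    have h0 : 0 < p z.1 := h0
    have h0' : 0 < q z.2 := h0'
    have a1 := lt_of_lt_of_le h0 (le_prb hp f z.1)
    have a2 := lt_of_lt_of_le h0' (le_prb hq g z.2)
    have a3 := lt_of_lt_of_le a1 (prb_le_sum hp f z.1)
    have a4 := lt_of_lt_of_le a2 (prb_le_sum hq g z.2)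
    rw [Real.log_mul a1.ne' a2.ne', Real.log_mul a3.ne' a4.ne']
    unfold pw
    ring
  rw [Finset.sum_congr rfl fun z _ => h2 z, Finset.sum_add_distrib, Fintype.sum_prod_type,
    Fintype.sum_prod_type, Finset.sum_comm, Finset.sum_mul_sum, Finset.sum_mul_sum]

open scoped Classical in
/-- pushforward -/
def pf {Ω₁ Ω₂ : Type*} [Fintype Ω₁] (f : Ω₁ → Ω₂) (p : Ω₁ → ℝ) : Ω₂ → ℝ :=
  fun b => ∑ a, if f a = b then p a else 0

theorem pf_nonneg (f : Ω₁ → Ω₂) {p : Ω₁ → ℝ} (hp : 0 ≤ p) : 0 ≤ pf f p := by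
  intro b
  refine Finset.sum_nonneg fun i _ => ?_
  split_ifs
  · exact hp i
  · exact le_rfl

theorem sum_pf_mul (f : Ω₁ → Ω₂) (p : Ω₁ → ℝ) (F : Ω₂ → ℝ) :
    ∑ b, pf f p b * F b = ∑ a, p a * F (f a) := by
  classical
  unfold pf
  simp only [Finset.sum_mul]
  rw [Finset.sum_comm]
  refine Finset.sum_congr rfl fun a _ => ?_
  rw [Finset.sum_eq_single (f a)]
  · simp
  · intro b _ hb; rw [if_neg (Ne.symm hb)]; simp
  · simp

theorem sum_pf (f : Ω₁ → Ω₂) (p : Ω₁ → ℝ) : ∑ b, pf f p b = ∑ a, p a := by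
  simpa using sum_pf_mul f p (fun _ => 1)

theorem Hn_pf (f : Ω₁ → Ω₂) (p : Ω₁ → ℝ) (g : Ω₂ → A) : Hn (pf f p) g = Hn p (fun x => g (f x)) := by
  classical
  have h1 : ∀ x, prb (pf f p) g (f x) = prb p (fun x => g (f x)) x := by
    intro x
    have := sum_pf_mul f p (fun b => if g b = g (f x) then 1 else 0)
    simp only [mul_ite, mul_one, mul_zero] at this
    unfold prb
    convert this
  unfold Hn
  rw [sum_pf, sum_pf_mul f p (fun b => (Real.log (∑ a, p a) - Real.log (prb (pf f p) g b)))]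
  simp only [h1]

/-- change of variables along an equivalence -/
theorem Hn_equiv (e : Ω₁ ≃ Ω₂) (p : Ω₂ → ℝ) (g : Ω₂ → A) :
    Hn p g = Hn (fun x => p (e x)) (fun x => g (e x)) := by
  classical
  have : p = pf e (fun x => p (e x)) := by
    funext b
    unfold pf
    rw [Finset.sum_eq_single (e.symm b)]
    · simp
    · intro a _ ha
      rw [if_neg]
      rintro rfl; simp at ha
    · simp
  conv_lhs => rw [this]
  rw [Hn_pf]

/-- fibre decomposition -/
theorem Hn_fib {T : Type*} [Fintype T] (R : Ω × T → ℝ) (F : Ω → T → A) :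
    ∑ t, Hn (fun a => R (a, t)) (fun a => F a t)
      = Hn R (fun z => (F z.1 z.2, z.2)) - Hn R (fun z => z.2) := by
  classical
  unfold Hn
  rw [← Finset.sum_sub_distrib, Fintype.sum_prod_type_right]
  refine Finset.sum_congr rfl fun t _ => Finset.sum_congr rfl fun a _ => ?_
  have h1 : prb R (fun z => (F z.1 z.2, z.2)) (a, t) = prb (fun a => R (a, t)) (fun a => F a t) a := by
    unfold prb
    rw [Fintype.sum_prod_type_right, Finset.sum_eq_single t]
    · refine Finset.sum_congr rfl fun b _ => ?_
      simp
    · intro s _ hs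
      refine Finset.sum_eq_zero fun b _ => ?_
      simp [hs]
    · simp
  have h2 : prb R (fun z => z.2) (a, t) = ∑ a, R (a, t) := by
    unfold prb
    rw [Fintype.sum_prod_type_right, Finset.sum_eq_single t]
    · refine Finset.sum_congr rfl fun b _ => ?_
      simp
    · intro s _ hs
      refine Finset.sum_eq_zero fun b _ => ?_
      simp [hs]
    · simp
  rw [h1, h2]
  ring

/-- entropy of a variable is at most the log of the number of values on the support -/
theorem Hn_le_log_card {p : Ω → ℝ} (hp : 0 ≤ p) (s : Finset Ω) (hs : ∀ x, p x ≠ 0 → x ∈ s) :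
    Hn p (fun x => x) ≤ (∑ x, p x) * Real.log s.card := by
  classical
  have h1 : ∀ x, prb p (fun x => x) x = p x := by intro x; unfold prb; simp
  unfold Hn
  simp only [h1]
  set m := ∑ x, p x with hm
  have hms : m = ∑ x ∈ s, p x := by
    rw [hm]; symm
    apply Finset.sum_subset (Finset.subset_univ _)
    intro x _ hx; by_contra h; exact hx (hs x h)
  have key : ∀ x, p x * (Real.log m - Real.log (p x)) ≤
      p x * Real.log s.card + (if x ∈ s then m / s.card - p x else 0) := by
    intro x
    rcases (hp x).eq_or_lt with h0 | h0
    · simp only [Pi.zero_apply] at h0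
      rw [← h0]
      have : 0 ≤ m := Finset.sum_nonneg fun i _ => hp i
      split_ifs
      · have : 0 ≤ m / s.card := by positivity
        simpa using this
      · simp
    have h0 : 0 < p x := h0
    have hx := hs x h0.ne'
    have hc : 0 < (s.card : ℝ) := by exact_mod_cast Finset.card_pos.mpr ⟨x, hx⟩
    have hmp : 0 < m := lt_of_lt_of_le h0 (Finset.single_le_sum (fun i _ => hp i) (Finset.mem_univ x))
    rw [if_pos hx]
    have := Real.log_le_sub_one_of_pos (x := m / (s.card * p x)) (by positivity)
    rw [Real.log_div hmp.ne' (by positivity), Real.log_mul hc.ne' h0.ne'] at this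
    have := mul_le_mul_of_nonneg_left this h0.le
    have e : p x * (m / (s.card * p x) - 1) = m / s.card - p x := by field_simp
    rw [e] at this
    linarith
  refine (Finset.sum_le_sum fun x _ => key x).trans ?_
  rw [Finset.sum_add_distrib, ← Finset.sum_mul]
  have : ∑ x, (if x ∈ s then m / s.card - p x else 0) ≤ 0 := by
    rw [Finset.sum_ite_mem, Finset.univ_inter, Finset.sum_sub_distrib, ← hms, Finset.sum_const, nsmul_eq_mul]
    rcases s.eq_empty_or_nonempty with h | h
    · subst h; simp at hms; simp [hms]
    · have hc : (s.card : ℝ) ≠ 0 := by exact_mod_cast (Finset.card_pos.mpr h).ne'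
      rw [mul_div_cancel₀ _ hc]; simp
  linarith

end core


set_option linter.unusedSectionVars false

section fam
variable {Ω A B : Type*} [Fintype Ω] {T : Type*} [Fintype T]

theorem fam_marg (r : T → Ω → ℝ) (f : Ω → A) :
    Hn (fun z : Ω × T => r z.2 z.1) (fun z => f z.1) = Hn (fun x => ∑ t, r t x) f := by
  classical
  rw [← Hn_pf (fun z : Ω × T => z.1) (fun z : Ω × T => r z.2 z.1) f]
  congr 1
  funext x
  unfold pf
  rw [Fintype.sum_prod_type, Finset.sum_eq_single x]
  · simp
  · intro y _ hy; simp [hy]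
  · simp

/-- conditioning on the index reduces entropy -/
theorem fam_le {r : T → Ω → ℝ} (hr : ∀ t, 0 ≤ r t) (f : Ω → A) :
    ∑ t, Hn (r t) f ≤ Hn (fun x => ∑ t, r t x) f := by
  have hR : 0 ≤ (fun z : Ω × T => r z.2 z.1) := fun z => hr z.2 z.1
  have h := Hn_fib (fun z : Ω × T => r z.2 z.1) (fun a _ => f a)
  have h2 := Hn_subadd hR (fun z => f z.1) (fun z => z.2) (fun z => (f z.1, z.2)) (by
    intro a b h1 h2; simp only [Prod.mk.injEq]; exact ⟨h1, h2⟩)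
  rw [fam_marg] at h2
  have h' : ∑ t, Hn (r t) f = ∑ t, Hn (fun a => r t a) (fun a => f a) := rfl
  rw [h', h]
  linarith

theorem fam_diff {r : T → Ω → ℝ} (hr : ∀ t, 0 ≤ r t) (f : Ω → A) (g : Ω → B)
    (hfg : ∀ x y, f x = f y → g x = g y) :
    ∑ t, (Hn (r t) f - Hn (r t) g) ≤ Hn (fun x => ∑ t, r t x) f - Hn (fun x => ∑ t, r t x) g := by
  have hR : 0 ≤ (fun z : Ω × T => r z.2 z.1) := fun z => hr z.2 z.1
  have h := Hn_fib (fun z : Ω × T => r z.2 z.1) (fun a _ => f a)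
  have h1 := Hn_fib (fun z : Ω × T => r z.2 z.1) (fun a _ => g a)
  have h2 := Hn_sub hR (fun z => f z.1) (fun z => (g z.1, z.2)) (fun z => g z.1)
    (fun z => (f z.1, z.2)) (by
    intro a b h1; exact hfg _ _ h1) (by intro a b h1; simp only [Prod.mk.injEq] at h1; exact h1.1)
    (by intro a b h1 h2; simp only [Prod.mk.injEq] at h1 h2 ⊢; exact ⟨h1, h2.2⟩)
  rw [fam_marg, fam_marg] at h2
  have h' : ∑ t, Hn (r t) f = ∑ t, Hn (fun a => r t a) (fun a => f a) := rfl
  have h'' : ∑ t, Hn (r t) g = ∑ t, Hn (fun a => r t a) (fun a => g a) := rfl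
  rw [Finset.sum_sub_distrib, h', h'', h, h1]
  linarith

end fam

section pfpw
variable {Ω₁ Ω₂ Ω₃ Ω₄ : Type*} [Fintype Ω₁] [Fintype Ω₂] [Fintype Ω₃] [Fintype Ω₄]

theorem pw_pf (f : Ω₁ → Ω₂) (g : Ω₃ → Ω₄) (p : Ω₁ → ℝ) (q : Ω₃ → ℝ) :
    pw (pf f p) (pf g q) = pf (fun z : Ω₁ × Ω₃ => (f z.1, g z.2)) (pw p q) := by
  classical
  funext z
  unfold pw pf
  rw [Finset.sum_mul_sum, Fintype.sum_prod_type]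
  refine Finset.sum_congr rfl fun a _ => Finset.sum_congr rfl fun b _ => ?_
  by_cases h1 : f a = z.1 <;> by_cases h2 : g b = z.2 <;> simp [h1, h2, Prod.ext_iff]

theorem pf_pf (f : Ω₁ → Ω₂) (g : Ω₂ → Ω₃) (p : Ω₁ → ℝ) : pf g (pf f p) = pf (fun x => g (f x)) p := by
  classical
  funext c
  have := sum_pf_mul f p (fun b => if g b = c then 1 else 0)
  simp only [mul_ite, mul_one, mul_zero] at this
  exact this

theorem pf_id (p : Ω₁ → ℝ) : pf (fun x => x) p = p := by
  classical
  funext c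
  unfold pf
  simp

theorem pf_equiv (e : Ω₁ ≃ Ω₂) (f : Ω₂ → Ω₃) (p : Ω₂ → ℝ) :
    pf f p = pf (fun x => f (e x)) (fun x => p (e x)) := by
  classical
  funext c
  unfold pf
  rw [← Equiv.sum_comp e]

end pfpw

section grp
variable {G : Type*} [AddCommGroup G] [Fintype G]

/-- entropy of a weight on `G` -/
def E1 {Ω : Type*} [Fintype Ω] (p : Ω → ℝ) : ℝ := Hn p (fun x => x)

/-- total mass -/
def ms {Ω : Type*} [Fintype Ω] (p : Ω → ℝ) : ℝ := ∑ x, p x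

/-- convolution -/
def cv (p q : G → ℝ) : G → ℝ := pf (fun z : G × G => z.1 + z.2) (pw p q)

theorem ms_nonneg {Ω : Type*} [Fintype Ω] {p : Ω → ℝ} (hp : 0 ≤ p) : 0 ≤ ms p :=
  Finset.sum_nonneg fun i _ => hp i

theorem cv_nonneg {p q : G → ℝ} (hp : 0 ≤ p) (hq : 0 ≤ q) : 0 ≤ cv p q := pf_nonneg _ (pw_nonneg hp hq)

theorem ms_cv (p q : G → ℝ) : ms (cv p q) = ms p * ms q := by
  unfold ms cv
  rw [sum_pf, sum_pw]

theorem Hn_cv {A : Type*} (p q : G → ℝ) (f : G → A) :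
    Hn (cv p q) f = Hn (pw p q) (fun z => f (z.1 + z.2)) := Hn_pf _ _ _

theorem E1_cv (p q : G → ℝ) : E1 (cv p q) = Hn (pw p q) (fun z => z.1 + z.2) := Hn_pf _ _ _

theorem cv_comm (p q : G → ℝ) : cv p q = cv q p := by
  unfold cv
  rw [pf_equiv (Equiv.prodComm G G)]
  congr 1
  · funext z; simp [add_comm]
  · funext z; simp [pw, mul_comm]

theorem cv_assoc (p q r : G → ℝ) : cv (cv p q) r = cv p (cv q r) := by
  unfold cv
  conv_lhs => rw [← pf_id r, pw_pf, pf_pf]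
  conv_rhs => rw [← pf_id p, pw_pf, pf_pf]
  rw [pf_equiv (Equiv.prodAssoc G G G)]
  congr 1
  · funext z; simp [add_assoc]
  · funext z; simp [pw, mul_assoc]

theorem Hn_prod' {Ω₁ Ω₂ A B C : Type*} [Fintype Ω₁] [Fintype Ω₂] {p : Ω₁ → ℝ} {q : Ω₂ → ℝ}
    (hp : 0 ≤ p) (hq : 0 ≤ q) (f : Ω₁ → A) (g : Ω₂ → B) (F : Ω₁ × Ω₂ → C)
    (hF : ∀ a b, F a = F b ↔ (f a.1 = f b.1 ∧ g a.2 = g b.2)) :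
    Hn (pw p q) F = ms q * Hn p f + ms p * Hn q g := by
  unfold ms
  rw [← Hn_prod hp hq f g]
  exact Hn_congr fun a b => by simp [hF]

/-- Kaimanovich–Vershik / submodularity for sums -/
theorem kv {p q r : G → ℝ} (hp : 0 ≤ p) (hq : 0 ≤ q) (hr : 0 ≤ r) :
    E1 (cv p (cv r q)) + ms p * ms r * E1 q ≤ ms p * E1 (cv r q) + ms r * E1 (cv p q) := by
  have hrq := pw_nonneg hr hq
  have hP := pw_nonneg hp hrq
  have h := Hn_sub hP (fun z => (z.1, z.2.1 + z.2.2)) (fun z => (z.2.1, z.1 + z.2.2))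
    (fun z => z.1 + (z.2.1 + z.2.2)) (fun z => z)
    (by intro a b h; simp only [Prod.mk.injEq] at h; rw [h.1, h.2])
    (by
      intro a b h; simp only [Prod.mk.injEq] at h
      calc _ = a.2.1 + (a.1 + a.2.2) := by abel
        _ = b.2.1 + (b.1 + b.2.2) := by rw [h.1, h.2]
        _ = _ := by abel)
    (by
      intro a b h h'; simp only [Prod.mk.injEq] at h h'
      refine Prod.ext h.1 (Prod.ext h'.1 ?_)
      have := h.2; rw [h'.1] at this; exact add_left_cancel this)
  have e1 : Hn (pw p (pw r q)) (fun z => (z.1, z.2.1 + z.2.2)) =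
      ms (pw r q) * E1 p + ms p * E1 (cv r q) := by
    rw [E1_cv]
    exact Hn_prod' hp hrq (fun x => x) (fun z => z.1 + z.2) _ (by intro a b; simp)
  have e2 : Hn (pw p (pw r q)) (fun z => (z.2.1, z.1 + z.2.2)) =
      ms (pw p q) * E1 r + ms r * E1 (cv p q) := by
    let e : G × G × G ≃ G × G × G :=
      ⟨fun z => (z.2.1, z.1, z.2.2), fun z => (z.2.1, z.1, z.2.2), fun _ => rfl, fun _ => rfl⟩
    rw [Hn_equiv e]
    have : (fun x => pw p (pw r q) (e x)) = pw r (pw p q) := by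
      funext z; simp [pw, e]; ring
    rw [this, E1_cv]
    exact Hn_prod' hr (pw_nonneg hp hq) (fun x => x) (fun z => z.1 + z.2) _ (by intro a b; simp [e])
  have e3 : Hn (pw p (pw r q)) (fun z => z) =
      ms (pw r q) * E1 p + ms p * (ms q * E1 r + ms r * E1 q) := by
    rw [Hn_prod' hp hrq (fun x => x) (fun x => x) _ (by intro a b; simp [Prod.ext_iff])]
    rw [Hn_prod' hr hq (fun x => x) (fun x => x) (fun x => x) (by intro a b; simp [Prod.ext_iff])]
    rfl
  have e4 : Hn (pw p (pw r q)) (fun z => z.1 + (z.2.1 + z.2.2)) = E1 (cv p (cv r q)) := by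
    unfold cv E1
    conv_rhs => rw [← pf_id p, pw_pf, pf_pf]
    rw [Hn_pf]
  have m1 : ms (pw p q) = ms p * ms q := sum_pw p q
  rw [e1, e2, e3, e4, m1] at h
  linarith

/-- the generic projection inequality -/
theorem proj_ineq {A B : Type*} [AddCommGroup A] [AddCommGroup B] {p q : G → ℝ} (hp : 0 ≤ p) (hq : 0 ≤ q)
    (f : G →+ A) (g : G →+ B) (hfg : ∀ x y, f x = f y → g x = g y) :
    Hn (pw p q) (fun z => g (z.1 + z.2)) + ms p * Hn q f
      ≤ Hn (pw p q) (fun z => f (z.1 + z.2)) + ms p * Hn q g := by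
  have hP := pw_nonneg hp hq
  have h := Hn_sub hP (fun z => f (z.1 + z.2)) (fun z => (f z.1, g z.2)) (fun z => g (z.1 + z.2))
    (fun z => (f z.1, f z.2)) (by intro a b h; exact hfg _ _ h)
    (by
      intro a b h; simp only [Prod.mk.injEq] at h
      rw [map_add, map_add, hfg _ _ h.1, h.2])
    (by
      intro a b h h'; simp only [Prod.mk.injEq, map_add] at h h' ⊢
      refine ⟨h'.1, ?_⟩
      rw [h'.1] at h; exact add_left_cancel h)
  rw [Hn_prod' hp hq f f (fun z => (f z.1, f z.2)) (by intro a b; simp),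
    Hn_prod' hp hq f g (fun z => (f z.1, g z.2)) (by intro a b; simp)] at h
  linarith

theorem sum_ge {A : Type*} [AddCommGroup A] {p q : G → ℝ} (hp : 0 ≤ p) (hq : 0 ≤ q)
    (f : G →+ A) : ms q * Hn p f ≤ Hn (pw p q) (fun z => f (z.1 + z.2)) := by
  have hP := pw_nonneg hp hq
  have h := Hn_subadd hP (fun z => f (z.1 + z.2)) (fun z => f z.2) (fun z => (f z.1, f z.2)) (by
    intro a b h h'; simp only [Prod.mk.injEq, map_add] at h h' ⊢
    refine ⟨?_, h'⟩
    rw [h'] at h; exact add_right_cancel h)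
  have e : Hn (pw p q) (fun z => f z.2) = ms p * Hn q f := by
    rw [Hn_prod' hp hq (fun _ => ()) f _ (by intro a b; simp), Hn_const p (by simp)]; ring
  rw [Hn_prod' hp hq f f (fun z => (f z.1, f z.2)) (by intro a b; simp), e] at h
  linarith

theorem sum_ge_left {p q : G → ℝ} (hp : 0 ≤ p) (hq : 0 ≤ q) : ms q * E1 p ≤ E1 (cv p q) := by
  rw [E1_cv]; exact sum_ge hp hq (AddMonoidHom.id G)

theorem sum_ge_right {p q : G → ℝ} (hp : 0 ≤ p) (hq : 0 ≤ q) : ms p * E1 q ≤ E1 (cv p q) := by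
  rw [cv_comm]; exact sum_ge_left hq hp

theorem sum_le_f {A : Type*} [AddCommGroup A] {p q : G → ℝ} (hp : 0 ≤ p) (hq : 0 ≤ q) (f : G →+ A) :
    Hn (cv p q) f ≤ ms q * Hn p f + ms p * Hn q f := by
  rw [Hn_cv, ← Hn_prod' hp hq f f (fun z => (f z.1, f z.2)) (by intro a b; simp)]
  exact Hn_mono (pw_nonneg hp hq) (by
    intro a b h; simp only [Prod.mk.injEq, map_add] at h ⊢; rw [h.1, h.2])

theorem sum_le {p q : G → ℝ} (hp : 0 ≤ p) (hq : 0 ≤ q) :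
    E1 (cv p q) ≤ ms q * E1 p + ms p * E1 q := sum_le_f hp hq (AddMonoidHom.id G)

/-- homogeneous doubling mass -/
def sd (p q : G → ℝ) : ℝ := ms q * E1 p + ms p * E1 q - E1 (cv p q)

theorem sd_le_left {p q : G → ℝ} (hp : 0 ≤ p) (hq : 0 ≤ q) : sd p q ≤ ms q * E1 p := by
  have := sum_ge_right hp hq
  unfold sd; linarith

theorem sd_le_right {p q : G → ℝ} (hp : 0 ≤ p) (hq : 0 ≤ q) : sd p q ≤ ms p * E1 q := by
  have := sum_ge_left hp hq
  unfold sd; linarith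

theorem sd_cv {p q r : G → ℝ} (hp : 0 ≤ p) (hq : 0 ≤ q) (hr : 0 ≤ r) :
    ms r * sd p q ≤ sd p (cv r q) := by
  have := kv hp hq hr
  unfold sd; rw [ms_cv]; linarith

theorem sd_proj {A : Type*} [AddCommGroup A] {p q : G → ℝ} (hp : 0 ≤ p) (hq : 0 ≤ q) (f : G →+ A) :
    sd p q ≤ ms q * (E1 p - Hn p f) + ms p * Hn q f := by
  have h := proj_ineq hp hq (AddMonoidHom.id G) f (by intro x y h; simp at h; rw [h])
  have h2 := sum_ge hp hq f
  simp only [AddMonoidHom.id_apply] at h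
  rw [← E1_cv] at h
  have e : Hn q (AddMonoidHom.id G) = E1 q := rfl
  rw [e] at h
  unfold sd; linarith

/-- fibre weight: law of `X` restricted to `X + X' = u`. -/
def fw (p p' : G → ℝ) (u : G) : G → ℝ := fun x => p x * p' (u - x)

theorem fw_nonneg {p p' : G → ℝ} (hp : 0 ≤ p) (hp' : 0 ≤ p') (u : G) : 0 ≤ fw p p' u :=
  fun x => mul_nonneg (hp x) (hp' (u - x))

theorem sum_fw (p p' : G → ℝ) (x : G) : ∑ u, fw p p' u x = ms p' * p x := by
  unfold fw ms
  rw [← Finset.mul_sum, mul_comm]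
  congr 1
  exact Equiv.sum_comp (Equiv.subRight x) p'

/-- `(x, x') ↦ (x, x + x')` -/
def shear (G : Type*) [AddCommGroup G] : G × G ≃ G × G :=
  ⟨fun z => (z.1, z.1 + z.2), fun z => (z.1, z.2 - z.1), fun z => by simp, fun z => by simp⟩

theorem sum_E1_fw {p p' : G → ℝ} (hp : 0 ≤ p) (hp' : 0 ≤ p') : ∑ u, E1 (fw p p' u) = sd p p' := by
  have h := Hn_fib (fun z : G × G => fw p p' z.2 z.1) (fun a _ => a)
  have : ∑ u, E1 (fw p p' u) = ∑ t, Hn (fun a => fw p p' t a) (fun a => a) := rfl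
  rw [this, h, Hn_equiv (shear G), Hn_equiv (shear G) _ (fun z => z.2)]
  have e : (fun x => fw p p' (shear G x).2 (shear G x).1) = pw p p' := by
    funext z; simp [fw, pw, shear]
  rw [e]
  unfold sd
  rw [E1_cv]
  congr 1
  exact Hn_prod' hp hp' (fun x => x) (fun x => x) _ (by intro a b; simp +contextual [shear])

end grp

set_option linter.unusedSectionVars false

section quadruple
variable {G : Type*} [AddCommGroup G] [Fintype G]

/-- four independent variables `((x₁,x₂),(y₁,y₂))` -/
def P4 (p p' q q' : G → ℝ) : (G × G) × (G × G) → ℝ := pw (pw p p') (pw q q')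

theorem P4_nonneg {p p' q q' : G → ℝ} (hp : 0 ≤ p) (hp' : 0 ≤ p') (hq : 0 ≤ q) (hq' : 0 ≤ q') :
    0 ≤ P4 p p' q q' := pw_nonneg (pw_nonneg hp hp') (pw_nonneg hq hq')

/-- entropy of all pairwise sums -/
def J4 (p p' q q' : G → ℝ) : ℝ :=
  Hn (P4 p p' q q') (fun z => (z.1.1 + z.2.1, (z.1.1 + z.1.2, z.2.1 + z.2.2)))

/-- fibre sums -/
def Zf (p p' q q' : G → ℝ) (t : G × G) : G → ℝ := cv (fw p p' t.1) (fw q q' t.2)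

theorem Zf_nonneg {p p' q q' : G → ℝ} (hp : 0 ≤ p) (hp' : 0 ≤ p') (hq : 0 ≤ q) (hq' : 0 ≤ q')
    (t : G × G) : 0 ≤ Zf p p' q q' t := cv_nonneg (fw_nonneg hp hp' _) (fw_nonneg hq hq' _)

def e4 (G : Type*) [AddCommGroup G] : (G × G) × (G × G) ≃ (G × G) × (G × G) :=
  ⟨fun z => ((z.1.1, z.2.1 - z.1.1), (z.1.2, z.2.2 - z.1.2)),
   fun z => ((z.1.1, z.2.1), (z.1.1 + z.1.2, z.2.1 + z.2.2)),
   fun z => by simp, fun z => by simp⟩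

theorem Zf_pf (p p' q q' : G → ℝ) :
    (fun z : G × (G × G) => Zf p p' q q' z.2 z.1) =
      pf (fun w : (G × G) × (G × G) => (w.1.1 + w.2.1, (w.1.1 + w.1.2, w.2.1 + w.2.2)))
        (P4 p p' q q') := by
  classical
  rw [pf_equiv (e4 G)]
  funext z
  unfold Zf cv
  symm
  unfold pf
  rw [Fintype.sum_prod_type]
  refine Finset.sum_congr rfl fun a _ => ?_
  rw [Finset.sum_eq_single z.2]
  · simp [e4, P4, pw, fw, Prod.ext_iff, mul_assoc]
  · intro b _ hb
    rw [if_neg]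
    intro h
    apply hb
    rw [← h]
    simp [e4]
  · simp

theorem Hn_Zf {A : Type*} (p p' q q' : G → ℝ) (F : G × (G × G) → A) :
    Hn (fun z : G × (G × G) => Zf p p' q q' z.2 z.1) F =
      Hn (P4 p p' q q') (fun w => F (w.1.1 + w.2.1, (w.1.1 + w.1.2, w.2.1 + w.2.2))) := by
  rw [Zf_pf, Hn_pf]

theorem ms_pw {Ω₁ Ω₂ : Type*} [Fintype Ω₁] [Fintype Ω₂] (p : Ω₁ → ℝ) (q : Ω₂ → ℝ) :
    ms (pw p q) = ms p * ms q := sum_pw p q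

theorem Hn_base {p p' q q' : G → ℝ} (hp : 0 ≤ p) (hp' : 0 ≤ p') (hq : 0 ≤ q) (hq' : 0 ≤ q')
    (mp : ms p = 1) (mp' : ms p' = 1) (mq : ms q = 1) (mq' : ms q' = 1) :
    Hn (P4 p p' q q') (fun z => (z.1.1 + z.1.2, z.2.1 + z.2.2)) = E1 (cv p p') + E1 (cv q q') := by
  unfold P4
  rw [Hn_prod' (pw_nonneg hp hp') (pw_nonneg hq hq') (fun z => z.1 + z.2) (fun z => z.1 + z.2) _
    (by intro a b; simp), ms_pw, ms_pw, mp, mp', mq, mq', E1_cv, E1_cv]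
  ring

theorem sum_E1_Zf {p p' q q' : G → ℝ} (hp : 0 ≤ p) (hp' : 0 ≤ p') (hq : 0 ≤ q) (hq' : 0 ≤ q')
    (mp : ms p = 1) (mp' : ms p' = 1) (mq : ms q = 1) (mq' : ms q' = 1) :
    ∑ t, E1 (Zf p p' q q' t) = J4 p p' q q' - (E1 (cv p p') + E1 (cv q q')) := by
  have h := Hn_fib (fun z : G × (G × G) => Zf p p' q q' z.2 z.1) (fun a _ => a)
  have : ∑ t, E1 (Zf p p' q q' t) = ∑ t, Hn (fun a => Zf p p' q q' t a) (fun a => a) := rfl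
  rw [this, h, Hn_Zf, Hn_Zf, Hn_base hp hp' hq hq' mp mp' mq mq']
  rfl

theorem sum_ms_fw (p p' : G → ℝ) : ∑ u, ms (fw p p' u) = ms p * ms p' := by
  unfold ms
  rw [Finset.sum_comm]
  have : ∀ x, ∑ u, fw p p' u x = ms p' * p x := sum_fw p p'
  simp only [this]
  rw [← Finset.mul_sum, mul_comm]
  rfl

theorem sum_sd_fw {p p' q q' : G → ℝ} (hp : 0 ≤ p) (hp' : 0 ≤ p') (hq : 0 ≤ q) (hq' : 0 ≤ q')
    (mp : ms p = 1) (mp' : ms p' = 1) (mq : ms q = 1) (mq' : ms q' = 1) :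
    ∑ u, ∑ w, sd (fw p p' u) (fw q q' w) =
      sd p p' + sd q q' - (J4 p p' q q' - (E1 (cv p p') + E1 (cv q q'))) := by
  have h := sum_E1_Zf hp hp' hq hq' mp mp' mq mq'
  rw [Fintype.sum_prod_type] at h
  rw [← h, ← sum_E1_fw hp hp', ← sum_E1_fw hq hq']
  unfold sd Zf
  simp only [Finset.sum_add_distrib, Finset.sum_sub_distrib, ← Finset.mul_sum, ← Finset.sum_mul]
  rw [sum_ms_fw, sum_ms_fw, mp, mp', mq, mq']
  ring

theorem J4_symm (hG : ∀ x : G, x + x = 0) (p q : G → ℝ) :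
    J4 p q q p = J4 p p q q := by
  let e : (G × G) × (G × G) ≃ (G × G) × (G × G) :=
    ⟨fun z => ((z.1.1, z.2.1), (z.2.2, z.1.2)), fun z => ((z.1.1, z.2.2), (z.1.2, z.2.1)),
      fun _ => rfl, fun _ => rfl⟩
  unfold J4
  rw [Hn_equiv e]
  have : (fun x => P4 p q q p (e x)) = P4 p p q q := by
    funext z; simp [P4, pw, e]; ring
  rw [this]
  refine Hn_congr fun a b => ?_
  obtain ⟨⟨x1, x2⟩, ⟨y1, y2⟩⟩ := a
  obtain ⟨⟨x1', x2'⟩, ⟨y1', y2'⟩⟩ := b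
  have key : ∀ x y z : G, x + y = (x + z) + (z + y) := fun x y z => by
    have := hG z
    calc x + y = x + (z + z) + y := by rw [this, add_zero]
      _ = _ := by abel
  simp only [e, Equiv.coe_fn_mk, Prod.mk.injEq]
  constructor
  · rintro ⟨h1, h2, h3⟩
    -- x1+y2, x1+y1, y2+x2
    refine ⟨h2, ?_, ?_⟩
    · rw [key x1 x2 y2, key x1' x2' y2', h1, add_comm y2, add_comm y2', add_comm x2, add_comm x2', h3]
    · rw [key y1 y2 x1, key y1' y2' x1', h1, add_comm y1, add_comm y1', h2]
  · rintro ⟨h1, h2, h3⟩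
    have h4 : x1 + y2 = x1' + y2' := by rw [key x1 y2 y1, key x1' y2' y1', h1, h3]
    refine ⟨h4, h1, ?_⟩
    rw [key y2 x2 x1, key y2' x2' x1', add_comm y2, add_comm y2', h4, h2]


theorem Hn_pairs {A : Type*} {p p' q q' : G → ℝ} (hp : 0 ≤ p) (hp' : 0 ≤ p') (hq : 0 ≤ q) (hq' : 0 ≤ q')
    (mp : ms p = 1) (mp' : ms p' = 1) (mq : ms q = 1) (mq' : ms q' = 1)
    (e : (G × G) × (G × G) ≃ (G × G) × (G × G))
    (F : (G × G) × (G × G) → A) (r r' s s' : G → ℝ)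
    (he : ∀ z, P4 r r' s s' (e z) = P4 p p' q q' z)
    (hF : ∀ a b, F (e a) = F (e b) ↔ (a.1.1 + a.1.2 = b.1.1 + b.1.2 ∧ a.2.1 + a.2.2 = b.2.1 + b.2.2)) :
    Hn (P4 r r' s s') F = E1 (cv p p') + E1 (cv q q') := by
  rw [Hn_equiv e, ← Hn_base hp hp' hq hq' mp mp' mq mq']
  have : (fun x => P4 r r' s s' (e x)) = P4 p p' q q' := funext he
  rw [this]
  exact Hn_congr fun a b => by rw [hF]; simp

theorem E1_cv4 {p p' q q' : G → ℝ} :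
    Hn (P4 p p' q q') (fun z => (z.1.1 + z.1.2) + (z.2.1 + z.2.2)) = E1 (cv (cv p p') (cv q q')) := by
  unfold E1 cv
  rw [pw_pf, pf_pf, Hn_pf]
  rfl

theorem E1_le_zero {Ω : Type*} [Fintype Ω] {p : Ω → ℝ} (hp : 0 ≤ p) (h : ms p = 0) : p = 0 := by
  funext x
  exact (Finset.sum_eq_zero_iff_of_nonneg (fun i _ => hp i)).1 h x (Finset.mem_univ x)

/-- the duplicated weight -/
def Rdup (r : G × G → G → ℝ) : (G × G) × (G × G) → ℝ :=
  fun z => (ms (r z.2))⁻¹ * (r z.2 z.1.1 * r z.2 z.1.2)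

theorem Rdup_nonneg {r : G × G → G → ℝ} (hr : ∀ t, 0 ≤ r t) : 0 ≤ Rdup r :=
  fun z => mul_nonneg (inv_nonneg.2 (ms_nonneg (hr z.2))) (mul_nonneg (hr _ _) (hr _ _))

theorem Rdup_marg1 {A : Type*} {r : G × G → G → ℝ} (hr : ∀ t, 0 ≤ r t) (F : G × (G × G) → A) :
    Hn (Rdup r) (fun z => F (z.1.1, z.2)) = Hn (fun z : G × (G × G) => r z.2 z.1) F := by
  classical
  rw [← Hn_pf (fun z : (G × G) × (G × G) => (z.1.1, z.2)) (Rdup r) F]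
  congr 1
  funext z
  unfold pf
  rw [Fintype.sum_prod_type_right, Finset.sum_eq_single z.2, Fintype.sum_prod_type, Finset.sum_eq_single z.1]
  · simp only [Prod.mk.eta, if_true]
    unfold Rdup
    simp only
    rw [← Finset.mul_sum, ← Finset.mul_sum]
    by_cases h : ms (r z.2) = 0
    · rw [E1_le_zero (hr _) h]; simp
    · change (ms (r z.2))⁻¹ * (r z.2 z.1 * ms (r z.2)) = _
      field_simp
  · intro b _ hb
    refine Finset.sum_eq_zero fun c _ => if_neg ?_
    intro h; exact hb (by rw [← h])
  · simp
  · intro b _ hb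
    refine Finset.sum_eq_zero fun c _ => if_neg ?_
    intro h; exact hb (by rw [← h])
  · simp

theorem Rdup_marg2 {A : Type*} {r : G × G → G → ℝ} (hr : ∀ t, 0 ≤ r t) (F : G × (G × G) → A) :
    Hn (Rdup r) (fun z => F (z.1.2, z.2)) = Hn (fun z : G × (G × G) => r z.2 z.1) F := by
  rw [← Rdup_marg1 hr F, Hn_equiv ((Equiv.prodComm G G).prodCongr (Equiv.refl (G × G)))]
  congr 1
  funext z
  simp [Rdup, mul_comm]

theorem Rdup_fib {A : Type*} {r : G × G → G → ℝ} (hr : ∀ t, 0 ≤ r t) (f : G × G → A) :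
    ∑ t, (ms (r t))⁻¹ * Hn (pw (r t) (r t)) f
      = Hn (Rdup r) (fun z => (f z.1, z.2)) - Hn (Rdup r) (fun z => z.2) := by
  rw [← Hn_fib (Rdup r) (fun a _ => f a)]
  refine Finset.sum_congr rfl fun t _ => ?_
  rw [← Hn_smul (pw_nonneg (hr t) (hr t)) (inv_nonneg.2 (ms_nonneg (hr t)))]
  rfl

/-- entropic Balog–Szemerédi–Gowers on the fibres -/
theorem bsg (hG : ∀ x : G, x + x = 0) {p p' q q' : G → ℝ}
    (hp : 0 ≤ p) (hp' : 0 ≤ p') (hq : 0 ≤ q) (hq' : 0 ≤ q')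
    (mp : ms p = 1) (mp' : ms p' = 1) (mq : ms q = 1) (mq' : ms q' = 1) :
    ∑ t, ((ms (Zf p p' q q' t))⁻¹ * E1 (cv (Zf p p' q q' t) (Zf p p' q q' t)) - E1 (Zf p p' q q' t))
      ≤ 2 * (E1 (cv p q) + E1 (cv p' q')) + 2 * (E1 (cv p p') + E1 (cv q q'))
        + 2 * (E1 (cv p q') + E1 (cv p' q)) - 3 * E1 (cv (cv p p') (cv q q')) - 3 * J4 p p' q q' := by
  have hneg : ∀ x : G, -x = x := fun x => neg_eq_of_add_eq_zero_left (hG x)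
  have hr := Zf_nonneg hp hp' hq hq'
  set r := Zf p p' q q' with hrdef
  have hR := Rdup_nonneg hr
  have f1 := Rdup_fib hr (fun z : G × G => z.1 + z.2)
  have f2 := Rdup_fib hr (fun z : G × G => z)
  have b0 : Hn (Rdup r) (fun z => z.2) = E1 (cv p p') + E1 (cv q q') := by
    rw [Rdup_marg1 hr (fun z => z.2), Hn_Zf, Hn_base hp hp' hq hq' mp mp' mq mq']
  have g2 : ∑ t, (ms (r t))⁻¹ * Hn (pw (r t) (r t)) (fun z => z) = 2 * ∑ t, E1 (r t) := by
    rw [Finset.mul_sum]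
    refine Finset.sum_congr rfl fun t _ => ?_
    rw [Hn_prod' (hr t) (hr t) (fun x => x) (fun x => x) (fun x => x) (by intro a b; simp [Prod.ext_iff])]
    by_cases h : ms (r t) = 0
    · rw [E1_le_zero (hr t) h]; simp [E1, Hn_zero]
    · unfold E1; field_simp; ring
  have g1 := sum_E1_Zf hp hp' hq hq' mp mp' mq mq'
  rw [← hrdef] at g1
  have hS : Hn (Rdup r) (fun z => z.2.1 + z.2.2) = E1 (cv (cv p p') (cv q q')) := by
    rw [Rdup_marg1 hr (fun z => z.2.1 + z.2.2), Hn_Zf, E1_cv4]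
  have ha : Hn (fun z : G × (G × G) => r z.2 z.1) (fun z => (z.1, z.2.1 + z.2.2))
      = E1 (cv p q) + E1 (cv p' q') := by
    rw [Hn_Zf]
    let e : (G × G) × (G × G) ≃ (G × G) × (G × G) :=
      ⟨fun z => ((z.1.1, z.2.1), (z.1.2, z.2.2)), fun z => ((z.1.1, z.2.1), (z.1.2, z.2.2)),
        fun _ => rfl, fun _ => rfl⟩
    refine Hn_pairs hp hq hp' hq' mp mq mp' mq' e _ p p' q q' (by intro z; simp [P4, pw, e]; ring) ?_
    intro a b
    simp only [e, Equiv.coe_fn_mk, Prod.mk.injEq]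
    constructor
    · rintro ⟨h1, h2⟩
      refine ⟨h1, ?_⟩
      have h3 : (a.1.1 + a.1.2) + (a.2.1 + a.2.2) = (b.1.1 + b.1.2) + (b.2.1 + b.2.2) := by
        rw [add_add_add_comm, h2, add_add_add_comm]
      rw [h1] at h3; exact add_left_cancel h3
    · rintro ⟨h1, h2⟩
      refine ⟨h1, ?_⟩
      rw [add_add_add_comm, h1, h2, add_add_add_comm]
  have hg : Hn (fun z : G × (G × G) => r z.2 z.1) (fun z => (z.1 + z.2.1, z.2.1 + z.2.2))
      = E1 (cv p q') + E1 (cv p' q) := by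
    rw [Hn_Zf]
    let e : (G × G) × (G × G) ≃ (G × G) × (G × G) :=
      ⟨fun z => ((z.1.1, z.2.1), (z.2.2, z.1.2)), fun z => ((z.1.1, z.2.2), (z.1.2, z.2.1)),
        fun _ => rfl, fun _ => rfl⟩
    refine Hn_pairs hp hq' hp' hq mp mq' mp' mq e _ p p' q q' (by intro z; simp [P4, pw, e]; ring) ?_
    intro a b
    have k : ∀ c : (G × G) × (G × G), c.1.1 + c.2.2 + (c.1.1 + c.2.1) = c.2.1 + c.2.2 := fun c => by
      calc _ = (c.1.1 + c.1.1) + (c.2.1 + c.2.2) := by abel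
        _ = _ := by rw [hG, zero_add]
    have k2 : ∀ c : (G × G) × (G × G), c.1.1 + c.2.1 + (c.2.2 + c.1.2) =
      (c.2.1 + c.2.2) + (c.1.1 + c.1.2) := fun c => by abel
    simp only [e, Equiv.coe_fn_mk, Prod.mk.injEq, k, k2]
    constructor
    · rintro ⟨h1, h2⟩
      refine ⟨?_, h1⟩
      rw [h1] at h2; exact add_left_cancel h2
    · rintro ⟨h1, h2⟩
      exact ⟨h2, by rw [h1, h2]⟩
  -- step 1
  have s1 := Hn_sub hR (fun z => (z.1.1 + z.1.2 + z.2.1, z.2.1 + z.2.2)) (fun z => z.2)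
    (fun z => z.2.1 + z.2.2) (fun z => (z.1.1 + z.1.2, z.2))
    (by intro a b h; simp only [Prod.mk.injEq] at h; exact h.2)
    (by intro a b h; have h' : a.2 = b.2 := h
        simp only [h'])
    (by
      intro a b h h'
      simp only [Prod.mk.injEq] at h h' ⊢
      refine ⟨?_, h'⟩
      have := h.1; rw [h'] at this; exact add_right_cancel this)
  -- step 2
  have s2 := Hn_sub hR (fun z => (z.1.1, z.1.2 + z.2.1, z.2.1 + z.2.2))
    (fun z => (z.1.2, z.1.1 + z.2.1, z.2.1 + z.2.2))
    (fun z => (z.1.1 + z.1.2 + z.2.1, z.2.1 + z.2.2)) (fun z => (z.1, z.2))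
    (by
      intro a b h; simp only [Prod.mk.injEq] at h ⊢
      refine ⟨?_, h.2.2⟩
      rw [add_assoc, h.1, h.2.1, add_assoc])
    (by
      intro a b h; simp only [Prod.mk.injEq] at h ⊢
      refine ⟨?_, h.2.2⟩
      calc _ = a.1.2 + (a.1.1 + a.2.1) := by abel
        _ = b.1.2 + (b.1.1 + b.2.1) := by rw [h.1, h.2.1]
        _ = _ := by abel)
    (by
      intro a b h h'; simp only [Prod.mk.injEq] at h h' ⊢
      have h1 := h.2.1; rw [h'.1] at h1
      have h2 := add_left_cancel h1
      have h3 := h.2.2; rw [h2] at h3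
      exact ⟨Prod.ext h.1 h'.1, Prod.ext h2 (add_left_cancel h3)⟩)
  have s3 := Hn_sub hR (fun z => (z.1.1, z.2.1 + z.2.2)) (fun z => (z.1.2 + z.2.1, z.2.1 + z.2.2))
    (fun z => z.2.1 + z.2.2) (fun z => (z.1.1, z.1.2 + z.2.1, z.2.1 + z.2.2))
    (by intro a b h; simp only [Prod.mk.injEq] at h; exact h.2)
    (by intro a b h; simp only [Prod.mk.injEq] at h; exact h.2)
    (by intro a b h h'; simp only [Prod.mk.injEq] at h h' ⊢; exact ⟨h.1, h'.1, h.2⟩)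
  have s4 := Hn_sub hR (fun z => (z.1.2, z.2.1 + z.2.2)) (fun z => (z.1.1 + z.2.1, z.2.1 + z.2.2))
    (fun z => z.2.1 + z.2.2) (fun z => (z.1.2, z.1.1 + z.2.1, z.2.1 + z.2.2))
    (by intro a b h; simp only [Prod.mk.injEq] at h; exact h.2)
    (by intro a b h; simp only [Prod.mk.injEq] at h; exact h.2)
    (by intro a b h h'; simp only [Prod.mk.injEq] at h h' ⊢; exact ⟨h.1, h'.1, h.2⟩)
  rw [Rdup_marg1 hr (fun z => (z.1, z.2.1 + z.2.2)), Rdup_marg2 hr (fun z => (z.1 + z.2.1, z.2.1 + z.2.2)),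
    ha, hg, hS] at s3
  rw [Rdup_marg2 hr (fun z => (z.1, z.2.1 + z.2.2)), Rdup_marg1 hr (fun z => (z.1 + z.2.1, z.2.1 + z.2.2)),
    ha, hg, hS] at s4
  rw [hS, b0] at s1
  rw [g2, b0, g1] at f2
  rw [b0] at f1
  rw [Finset.sum_sub_distrib, g1]
  simp only [E1_cv (r _) (r _)]
  rw [f1]
  linarith

end quadruple

set_option linter.unusedSectionVars false

section minim
variable {G : Type*} [AddCommGroup G] [Fintype G]

theorem prb_id {Ω : Type*} [Fintype Ω] (p : Ω → ℝ) (x : Ω) : prb p (fun x => x) x = p x := by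
  classical
  unfold prb
  simp

theorem E1_eq {Ω : Type*} [Fintype Ω] (p : Ω → ℝ) : E1 p = ms p * Real.log (ms p) + ∑ x, Real.negMulLog (p x) := by
  unfold E1 Hn
  simp only [prb_id, mul_sub, Finset.sum_sub_distrib, ← Finset.sum_mul, Real.negMulLog]
  simp only [neg_mul, Finset.sum_neg_distrib]
  unfold ms
  ring

theorem continuous_E1 {Ω : Type*} [Fintype Ω] : Continuous (fun p : Ω → ℝ => E1 p) := by
  simp only [E1_eq]
  have h : Continuous (fun p : Ω → ℝ => ms p) := by unfold ms; fun_prop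
  refine (Real.continuous_mul_log.comp h).add ?_
  refine continuous_finsetSum _ fun i _ => Real.continuous_negMulLog.comp (continuous_apply i)

theorem continuous_cv : Continuous (fun z : (G → ℝ) × (G → ℝ) => cv z.1 z.2) := by
  classical
  refine continuous_pi fun x => ?_
  unfold cv pf
  refine continuous_finsetSum _ fun i _ => ?_
  split_ifs
  · unfold pw; fun_prop
  · exact continuous_const

/-- the functional to be minimised (homogeneous) -/
def phi (z0 p q : G → ℝ) : ℝ :=
  E1 (cv p q) - (17/32) * (ms q * E1 p + ms p * E1 q)
    + (1/16) * (ms q * E1 (cv z0 p) + ms p * E1 (cv z0 q))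

theorem continuous_phi (z0 : G → ℝ) : Continuous (fun z : (G → ℝ) × (G → ℝ) => phi z0 z.1 z.2) := by
  have hm : Continuous (fun p : G → ℝ => ms p) := by unfold ms; fun_prop
  have hE : Continuous (fun p : G → ℝ => E1 p) := continuous_E1
  have hc : Continuous (fun p : G → ℝ => E1 (cv z0 p)) :=
    hE.comp (continuous_cv.comp (continuous_const.prodMk continuous_id))
  have h1 : Continuous (fun z : (G → ℝ) × (G → ℝ) => E1 (cv z.1 z.2)) := hE.comp continuous_cv
  unfold phi
  have m1 := hm.comp (continuous_fst (X := G → ℝ) (Y := G → ℝ))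
  have m2 := hm.comp (continuous_snd (X := G → ℝ) (Y := G → ℝ))
  have e1 := hE.comp (continuous_fst (X := G → ℝ) (Y := G → ℝ))
  have e2 := hE.comp (continuous_snd (X := G → ℝ) (Y := G → ℝ))
  have c1 := hc.comp (continuous_fst (X := G → ℝ) (Y := G → ℝ))
  have c2 := hc.comp (continuous_snd (X := G → ℝ) (Y := G → ℝ))
  exact (h1.sub (continuous_const.mul ((m2.mul e1).add (m1.mul e2)))).add
    (continuous_const.mul ((m2.mul c1).add (m1.mul c2)))

theorem cv_smul_left (c : ℝ) (p q : G → ℝ) : cv (fun x => c * p x) q = fun x => c * cv p q x := by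
  classical
  funext x
  unfold cv pf pw
  rw [Finset.mul_sum]
  refine Finset.sum_congr rfl fun i _ => ?_
  split_ifs <;> ring

theorem cv_smul_right (c : ℝ) (p q : G → ℝ) : cv p (fun x => c * q x) = fun x => c * cv p q x := by
  rw [cv_comm, cv_smul_left, cv_comm]

theorem ms_smul {Ω : Type*} [Fintype Ω] (c : ℝ) (p : Ω → ℝ) : ms (fun x => c * p x) = c * ms p := by
  unfold ms; rw [Finset.mul_sum]

theorem E1_smul {Ω : Type*} [Fintype Ω] {p : Ω → ℝ} (hp : 0 ≤ p) {c : ℝ} (hc : 0 ≤ c) :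
    E1 (fun x => c * p x) = c * E1 p := Hn_smul hp hc _

theorem phi_smul {z0 p q : G → ℝ} (hz : 0 ≤ z0) (hp : 0 ≤ p) (hq : 0 ≤ q) {c d : ℝ} (hc : 0 ≤ c) (hd : 0 ≤ d) :
    phi z0 (fun x => c * p x) (fun x => d * q x) = c * d * phi z0 p q := by
  have h1 : 0 ≤ fun x => d * cv p q x := fun x => mul_nonneg hd (cv_nonneg hp hq x)
  unfold phi
  rw [cv_smul_left, cv_smul_right, E1_smul h1 hc, E1_smul (cv_nonneg hp hq) hd, cv_smul_right,
    cv_smul_right, E1_smul (cv_nonneg hz hp) hc, E1_smul (cv_nonneg hz hq) hd, E1_smul hp hc, E1_smul hq hd,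
    ms_smul, ms_smul]
  ring

theorem cv_zero_left (q : G → ℝ) : cv 0 q = 0 := by
  classical
  funext x
  unfold cv pf pw
  simp

theorem cv_zero_right (q : G → ℝ) : cv q 0 = 0 := by rw [cv_comm, cv_zero_left]

theorem E1_zero {Ω : Type*} [Fintype Ω] : E1 (0 : Ω → ℝ) = 0 := Hn_zero _

theorem ms_zero {Ω : Type*} [Fintype Ω] : ms (0 : Ω → ℝ) = 0 := by simp [ms]

theorem norm_dist {Ω : Type*} [Fintype Ω] {p : Ω → ℝ} (hp : 0 ≤ p) (h : ms p ≠ 0) :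
    (fun x => (ms p)⁻¹ * p x) ∈ stdSimplex ℝ Ω := by
  refine ⟨fun x => mul_nonneg (inv_nonneg.2 (ms_nonneg hp)) (hp x), ?_⟩
  rw [← Finset.mul_sum]; exact inv_mul_cancel₀ h

theorem exists_min {z0 : G → ℝ} (hz : 0 ≤ z0) : ∃ p q : G → ℝ, 0 ≤ p ∧ 0 ≤ q ∧ ms p = 1 ∧ ms q = 1 ∧
    ∀ p' q' : G → ℝ, 0 ≤ p' → 0 ≤ q' → ms p' * ms q' * phi z0 p q ≤ phi z0 p' q' := by
  classical
  have hne : ((stdSimplex ℝ G) ×ˢ (stdSimplex ℝ G)).Nonempty :=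
    ⟨(Pi.single 0 1, Pi.single 0 1), single_mem_stdSimplex ℝ 0, single_mem_stdSimplex ℝ 0⟩
  obtain ⟨⟨p, q⟩, ⟨h1, h2⟩, hmin⟩ := ((isCompact_stdSimplex ℝ G).prod (isCompact_stdSimplex ℝ G)).exists_isMinOn hne
    (continuous_phi z0).continuousOn
  refine ⟨p, q, h1.1, h2.1, h1.2, h2.2, fun p' q' hp' hq' => ?_⟩
  by_cases hm : ms p' = 0
  · rw [hm, E1_le_zero hp' hm]
    simp [phi, cv_zero_left, cv_zero_right, E1_zero, ms_zero]
  by_cases hm' : ms q' = 0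
  · rw [hm', E1_le_zero hq' hm']
    simp [phi, cv_zero_right, E1_zero, ms_zero]
  have h := hmin (show ((fun x => (ms p')⁻¹ * p' x), (fun x => (ms q')⁻¹ * q' x)) ∈ _ from
    ⟨norm_dist hp' hm, norm_dist hq' hm'⟩)
  have h : phi z0 p q ≤ phi z0 (fun x => (ms p')⁻¹ * p' x) (fun x => (ms q')⁻¹ * q' x) := h
  have a1 := ms_nonneg hp'
  have a2 := ms_nonneg hq'
  rw [phi_smul hz hp' hq' (inv_nonneg.2 a1) (inv_nonneg.2 a2)] at h
  calc _ ≤ ms p' * ms q' * ((ms p')⁻¹ * (ms q')⁻¹ * phi z0 p' q') := by gcongr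
    _ = _ := by field_simp

end minim

set_option linter.unusedSectionVars false

section endgame
variable {G : Type*} [AddCommGroup G] [Fintype G]

theorem fam_cv {T : Type*} [Fintype T] {z0 : G → ℝ} (hz : 0 ≤ z0) {r : T → G → ℝ} (hr : ∀ t, 0 ≤ r t) :
    ∑ t, E1 (cv z0 (r t)) ≤ E1 (cv z0 (fun x => ∑ t, r t x)) := by
  simp only [E1_cv]
  have := fam_le (r := fun t => pw z0 (r t)) (fun t => pw_nonneg hz (hr t)) (fun z : G × G => z.1 + z.2)
  refine this.trans (le_of_eq ?_)
  congr 1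
  funext z
  simp [pw, Finset.mul_sum]

theorem cv_sum_left {T : Type*} [Fintype T] (r : T → G → ℝ) (q : G → ℝ) (x : G) :
    ∑ t, cv (r t) q x = cv (fun x => ∑ t, r t x) q x := by
  classical
  unfold cv pf pw
  rw [Finset.sum_comm]
  refine Finset.sum_congr rfl fun z _ => ?_
  split_ifs
  · rw [Finset.sum_mul]
  · simp

theorem cv_sum_right {T : Type*} [Fintype T] (r : T → G → ℝ) (q : G → ℝ) (x : G) :
    ∑ t, cv q (r t) x = cv q (fun x => ∑ t, r t x) x := by
  rw [cv_comm, ← cv_sum_left]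
  simp only [cv_comm q]

theorem sum_fw' {p p' : G → ℝ} (h : ms p' = 1) : (fun x => ∑ u, fw p p' u x) = p := by
  funext x; rw [sum_fw, h, one_mul]

theorem sum_Zf {p p' q q' : G → ℝ} (mp' : ms p' = 1) (mq' : ms q' = 1) :
    (fun x => ∑ t, Zf p p' q q' t x) = cv p q := by
  funext x
  rw [Fintype.sum_prod_type]
  unfold Zf
  simp only [cv_sum_right]
  rw [sum_fw' mq', cv_sum_left, sum_fw' mp']

theorem ms_Zf (p p' q q' : G → ℝ) (t : G × G) :
    ms (Zf p p' q q' t) = ms (fw p p' t.1) * ms (fw q q' t.2) := ms_cv _ _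

theorem sum_ms_Zf {p p' q q' : G → ℝ}
    (mp : ms p = 1) (mp' : ms p' = 1) (mq : ms q = 1) (mq' : ms q' = 1) :
    ∑ t, ms (Zf p p' q q' t) = 1 := by
  simp only [ms_Zf]
  rw [Fintype.sum_prod_type]
  simp only [← Finset.mul_sum]
  rw [sum_ms_fw, ← Finset.sum_mul, sum_ms_fw, mp, mp', mq, mq']; norm_num

variable {z0 p q : G → ℝ}

/-- use of minimality for the sums -/
theorem use_sum (hz : 0 ≤ z0) (mz : ms z0 = 1) (hp : 0 ≤ p) (hq : 0 ≤ q) (mp : ms p = 1) (mq : ms q = 1)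
    (hmin : ∀ p' q' : G → ℝ, 0 ≤ p' → 0 ≤ q' → ms p' * ms q' * phi z0 p q ≤ phi z0 p' q')
    {p' q' : G → ℝ} (hp' : 0 ≤ p') (hq' : 0 ≤ q') (mp' : ms p' = 1) (mq' : ms q' = 1)  :
    phi z0 p q ≤ E1 (cv (cv p p') (cv q q')) - (17/32) * (E1 (cv p p') + E1 (cv q q'))
      + (1/16) * (E1 (cv p p') + E1 (cv q q') + E1 (cv z0 p') + E1 (cv z0 q') - E1 p' - E1 q') := by
  have h := hmin (cv p p') (cv q q') (cv_nonneg hp hp') (cv_nonneg hq hq')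
  have k1 := kv hz hp' hp
  have k2 := kv hz hq' hq
  simp only [phi, ms_cv, mp, mq, mp', mq', mz, one_mul] at h k1 k2 ⊢
  linarith

theorem use_fib (hz : 0 ≤ z0) (hp : 0 ≤ p) (hq : 0 ≤ q) (mp : ms p = 1) (mq : ms q = 1)
    (hmin : ∀ p' q' : G → ℝ, 0 ≤ p' → 0 ≤ q' → ms p' * ms q' * phi z0 p q ≤ phi z0 p' q')
    {p' q' : G → ℝ} (hp' : 0 ≤ p') (hq' : 0 ≤ q') (mp' : ms p' = 1) (mq' : ms q' = 1)  :
    phi z0 p q ≤ J4 p p' q q' - (E1 (cv p p') + E1 (cv q q')) - (17/32) * (sd p p' + sd q q')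
      + (1/16) * (E1 (cv z0 p) + E1 (cv z0 q)) := by
  have h : ∑ u, ∑ w, ms (fw p p' u) * ms (fw q q' w) * phi z0 p q
      ≤ ∑ u, ∑ w, phi z0 (fw p p' u) (fw q q' w) :=
    Finset.sum_le_sum fun u _ => Finset.sum_le_sum fun w _ =>
      hmin _ _ (fw_nonneg hp hp' u) (fw_nonneg hq hq' w)
  have g := sum_E1_Zf hp hp' hq hq' mp mp' mq mq'
  rw [Fintype.sum_prod_type] at g
  have f1 := fam_cv hz (fw_nonneg hp hp')
  have f2 := fam_cv hz (fw_nonneg hq hq')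
  rw [sum_fw' mp'] at f1
  rw [sum_fw' mq'] at f2
  unfold Zf at g
  conv at h => rhs; unfold phi
  simp only [Finset.sum_add_distrib, Finset.sum_sub_distrib, ← Finset.mul_sum, ← Finset.sum_mul] at h
  rw [sum_ms_fw, sum_ms_fw, mp, mp', mq, mq', g, sum_E1_fw hp hp', sum_E1_fw hq hq'] at h
  linarith

theorem use_end (hz : 0 ≤ z0) (hp : 0 ≤ p) (hq : 0 ≤ q) (mp : ms p = 1) (mq : ms q = 1)
    (hmin : ∀ p' q' : G → ℝ, 0 ≤ p' → 0 ≤ q' → ms p' * ms q' * phi z0 p q ≤ phi z0 p' q') :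
    phi z0 p q ≤ (∑ t, ((ms (Zf p q q p t))⁻¹ * E1 (cv (Zf p q q p t) (Zf p q q p t)) - E1 (Zf p q q p t)))
      - (1/16) * (∑ t, E1 (Zf p q q p t)) + (1/8) * E1 (cv z0 (cv p q)) := by
  have hr := Zf_nonneg hp hq hq hp
  have hf := fam_cv hz hr
  rw [sum_Zf mq mp] at hf
  have h : ∑ t, ms (Zf p q q p t) * phi z0 p q ≤
     ∑ t, ((ms (Zf p q q p t))⁻¹ * E1 (cv (Zf p q q p t) (Zf p q q p t)) - E1 (Zf p q q p t)
       - (1/16) * E1 (Zf p q q p t) + (1/8) * E1 (cv z0 (Zf p q q p t))) := by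
    refine Finset.sum_le_sum fun t _ => ?_
    have h := hmin _ _ (hr t) (hr t)
    set r := Zf p q q p t
    rcases (ms_nonneg (show 0 ≤ r from hr t)).eq_or_lt with h0 | h0
    · have : r = 0 := E1_le_zero (hr t) h0.symm
      rw [this]; simp [ms_zero, cv_zero_right, E1_zero]
    · have := mul_le_mul_of_nonneg_left h (inv_nonneg.2 h0.le)
      have e1 : (ms r)⁻¹ * (ms r * ms r * phi z0 p q) = ms r * phi z0 p q := by
        have := h0.ne'
        field_simp
      rw [e1] at this
      refine this.trans (le_of_eq ?_)
      unfold phi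
      have := h0.ne'
      field_simp
      ring
  rw [← Finset.sum_mul, sum_ms_Zf mp mq mq mp, Finset.sum_add_distrib, Finset.sum_sub_distrib,
    ← Finset.mul_sum, ← Finset.mul_sum] at h
  linarith

theorem minimiser_zero (hG : ∀ x : G, x + x = 0) (hz : 0 ≤ z0) (mz : ms z0 = 1)
    (hp : 0 ≤ p) (hq : 0 ≤ q) (mp : ms p = 1) (mq : ms q = 1)
    (hmin : ∀ p' q' : G → ℝ, 0 ≤ p' → 0 ≤ q' → ms p' * ms q' * phi z0 p q ≤ phi z0 p' q') :
    E1 (cv p q) = E1 p ∧ E1 (cv p q) = E1 q := by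
  have a1 := use_sum hz mz hp hq mp mq hmin hp hq mp mq
  have a2 := use_fib hz hp hq mp mq hmin hp hq mp mq
  have b1 := use_sum hz mz hp hq mp mq hmin hq hp mq mp
  have b2 := use_fib hz hp hq mp mq hmin hq hp mq mp
  have c1 := use_end hz hp hq mp mq hmin
  have c2 := bsg hG hp hq hq hp mp mq mq mp
  rw [sum_E1_Zf hp hq hq hp mp mq mq mp] at c1
  have eS : cv (cv p q) (cv q p) = cv (cv p p) (cv q q) := by
    rw [cv_assoc, cv_assoc, ← cv_assoc q q p, cv_comm (cv q q) p]
  have k1 := kv hz hp hq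
  have k1' := kv hz hq hp
  have k2 := kv (cv_nonneg hp hq) hp hq
  have k3 := kv hp hq hp
  have k4 := kv hq hp hq
  have l1 := sum_ge_left (cv_nonneg hp hp) hq
  have l2 := sum_ge_left (cv_nonneg hq hq) hp
  have g1 := sum_ge_left hp hq
  have g2 := sum_ge_right hp hq
  have e1 : cv (cv p p) q = cv p (cv p q) := cv_assoc _ _ _
  have e2 : cv (cv q q) p = cv q (cv p q) := by rw [cv_assoc, cv_comm q p]
  have e3 : cv (cv p q) p = cv p (cv p q) := cv_comm _ _
  rw [eS] at b1 c2 k2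
  rw [J4_symm hG] at b2 c1 c2
  rw [cv_comm q p] at *
  rw [e1] at l1
  rw [e2] at l2
  rw [e3] at k2
  simp only [phi, sd, ms_cv, mp, mq, mz, one_mul, mul_one] at *
  rw [cv_comm q p] at *
  constructor <;> linarith

end endgame

set_option linter.unusedSectionVars false

section pfr
variable {G : Type} [AddCommGroup G] [Module (ZMod 2) G] [Fintype G]

theorem two_tor (x : G) : x + x = 0 := by
  have h : (2 : ZMod 2) • x = x + x := two_smul _ _
  rw [← h, show (2 : ZMod 2) = 0 from rfl, zero_smul]

theorem cv_apply (p q : G → ℝ) (x : G) : cv p q x = ∑ y, q y * p (x - y) := by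
  classical
  unfold cv pf pw
  rw [Fintype.sum_prod_type_right]
  refine Finset.sum_congr rfl fun y _ => ?_
  rw [Finset.sum_eq_single (x - y)]
  · simp [mul_comm]
  · intro b _ hb
    rw [if_neg]
    intro h
    exact hb (eq_sub_of_add_eq h)
  · simp

theorem equality_case {p q : G → ℝ} (hp : 0 ≤ p) (hq : 0 ≤ q) (mp : ms p = 1) (mq : ms q = 1)
    (h : E1 (cv p q) = E1 p) (x y y' : G) (hy : q y ≠ 0) (hy' : q y' ≠ 0) : p (x - y) = p (x - y') := by
  have hle : ∀ x, ∑ y, q y • Real.negMulLog (p (x - y)) ≤ Real.negMulLog (∑ y, q y • p (x - y)) := fun x =>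
    Real.concaveOn_negMulLog.le_map_sum (fun i _ => hq i) mq (fun i _ => hp _)
  have hs : ∑ x, ∑ y, q y • Real.negMulLog (p (x - y)) = ∑ x, Real.negMulLog (∑ y, q y • p (x - y)) := by
    rw [E1_eq, E1_eq, ms_cv, mp, mq] at h
    simp only [cv_apply] at h
    simp only [smul_eq_mul]
    rw [Finset.sum_comm]
    have : ∀ y, ∑ x, q y * Real.negMulLog (p (x - y)) = q y * ∑ x, Real.negMulLog (p x) := by
      intro y
      rw [← Finset.mul_sum]
      congr 1
      exact Equiv.sum_comp (Equiv.subRight y) (fun x => Real.negMulLog (p x))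
    simp only [this]
    rw [← Finset.sum_mul]
    change ms q * _ = _
    rw [mq]
    simp only [mul_one, Real.log_one, mul_zero, zero_add] at h
    rw [one_mul, h]
  have heq := (Finset.sum_eq_sum_iff_of_le (fun i _ => hle i)).1 hs x (Finset.mem_univ x)
  have := (Real.strictConcaveOn_negMulLog.map_sum_eq_iff' (t := Finset.univ) (w := q) (p := fun y => p (x - y))
    (fun i _ => hq i) mq (fun i _ => hp _)).1 heq.symm
  rw [this y (Finset.mem_univ _) hy, this y' (Finset.mem_univ _) hy']

/-- stabiliser -/
def stab (p : G → ℝ) : AddSubgroup G where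
  carrier := {v | ∀ x, p (x + v) = p x}
  zero_mem' := by intro x; simp
  add_mem' := by
    intro a b ha hb x
    rw [← add_assoc, hb, ha]
  neg_mem' := by
    intro a ha x
    have := ha (x + -a)
    rw [neg_add_cancel_right] at this; exact this.symm

/-- entropy of a `V`-invariant weight -/
theorem E1_inv {p : G → ℝ} (hp : 0 ≤ p) (V : Submodule (ZMod 2) G) (hV : ∀ v ∈ V, ∀ x, p (x + v) = p x) :
    E1 p = Hn p V.mkQ + ms p * Real.log (Nat.card V) := by
  classical
  have hprb : ∀ x, prb p V.mkQ x = Nat.card V * p x := by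
    intro x
    unfold prb
    have : ∀ y, (if V.mkQ y = V.mkQ x then p y else 0) = if y - x ∈ V then p x else 0 := by
      intro y
      have e : V.mkQ y = V.mkQ x ↔ y - x ∈ V := Submodule.Quotient.eq V
      by_cases h : y - x ∈ V
      · rw [if_pos (e.2 h), if_pos h, ← hV _ h x]; congr 1; abel
      · rw [if_neg (fun h' => h (e.1 h')), if_neg h]
    calc _ = ∑ y, (if y - x ∈ V then p x else 0) := Finset.sum_congr rfl fun y _ => by
            rw [← this y]
      _ = ∑ y, (if y ∈ V then p x else 0) := Equiv.sum_comp (Equiv.subRight x) (fun y => if y ∈ V then p x else 0)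
      _ = _ := by
        rw [← Finset.sum_filter, Finset.sum_const, nsmul_eq_mul]
        congr 2
        rw [Nat.card_eq_fintype_card, Fintype.card_subtype]
  have hc : (Nat.card V : ℝ) ≠ 0 := by
    exact_mod_cast Nat.card_pos.ne'
  unfold E1 Hn ms
  rw [Finset.sum_mul, ← Finset.sum_add_distrib]
  refine Finset.sum_congr rfl fun x _ => ?_
  rw [prb_id, hprb]
  by_cases h : p x = 0
  · rw [h]; ring
  · rw [Real.log_mul hc h]; ring

theorem cv_inv {p : G → ℝ} (q : G → ℝ) {v : G} (h : ∀ x, p (x + v) = p x) (x : G) :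
    cv q p (x + v) = cv q p x := by
  rw [cv_comm, cv_apply, cv_apply]
  refine Finset.sum_congr rfl fun y _ => ?_
  rw [show x + v - y = (x - y) + v by abel, h]

theorem card_coset_le {q : G → ℝ} (hq : 0 ≤ q) (V : Submodule (ZMod 2) G) (y0 : G)
    (h : ∀ y, q y ≠ 0 → y - y0 ∈ V) : E1 q ≤ ms q * Real.log (Nat.card V) := by
  classical
  have := Hn_le_log_card hq ((Finset.univ.filter (fun v => v ∈ V)).map (Equiv.addRight y0).toEmbedding)
    (by
      intro y hy
      simp only [Finset.mem_map, Finset.mem_filter, Finset.mem_univ, true_and, Equiv.coe_toEmbedding, Equiv.coe_addRight]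
      exact ⟨y - y0, h y hy, by abel⟩)
  rw [Finset.card_map] at this
  rw [Nat.card_eq_fintype_card, Fintype.card_subtype]
  exact this

open scoped Classical in
/-- uniform weight -/
def uV (V : Submodule (ZMod 2) G) : G → ℝ := fun x => if x ∈ V then (Nat.card V : ℝ)⁻¹ else 0

theorem card_pos (V : Submodule (ZMod 2) G) : 0 < (Nat.card V : ℝ) := by exact_mod_cast Nat.card_pos

theorem uV_nonneg (V : Submodule (ZMod 2) G) : 0 ≤ uV V := by
  intro x; unfold uV; split_ifs
  · exact (inv_pos.2 (card_pos V)).le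
  · exact le_rfl

theorem ms_uV (V : Submodule (ZMod 2) G) : ms (uV V) = 1 := by
  classical
  unfold ms uV
  rw [← Finset.sum_filter, Finset.sum_const, nsmul_eq_mul]
  rw [show (Finset.univ.filter (fun v => v ∈ V)).card = Nat.card V by
    rw [Nat.card_eq_fintype_card, Fintype.card_subtype]]
  exact mul_inv_cancel₀ (card_pos V).ne'

theorem log_card_nonneg (V : Submodule (ZMod 2) G) : 0 ≤ Real.log (Nat.card V) :=
  Real.log_natCast_nonneg _

theorem E1_le_proj {p : G → ℝ} (hp : 0 ≤ p) (V : Submodule (ZMod 2) G) :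
    E1 p ≤ Hn p V.mkQ + ms p * Real.log (Nat.card V) := by
  have hu := uV_nonneg V
  have hinv : ∀ v ∈ V, ∀ x, uV V (x + v) = uV V x := by
    intro v hv x; unfold uV
    have e : x + v ∈ V ↔ x ∈ V := Submodule.add_mem_iff_left V hv
    by_cases h : x ∈ V
    · rw [if_pos h, if_pos (e.2 h)]
    · rw [if_neg h, if_neg (fun h' => h (e.1 h'))]
  have h1 := E1_inv hu V hinv
  have h2 := card_coset_le hu V 0 (by
    intro y hy; by_contra h; apply hy; unfold uV; rw [if_neg (by simpa using h)])
  have h3 := E1_inv (cv_nonneg hp hu) V (fun v hv x => cv_inv p (hinv v hv) x)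
  have h4 := sum_le_f hp hu V.mkQ.toAddMonoidHom
  have h4 : Hn (cv p (uV V)) V.mkQ ≤ ms (uV V) * Hn p V.mkQ + ms p * Hn (uV V) V.mkQ := h4
  have h5 := sum_ge_left hp hu
  have h6 := Hn_nonneg hu V.mkQ
  rw [ms_uV] at h1 h2 h4 h5
  rw [ms_cv, ms_uV] at h3
  have h7 : Hn (uV V) V.mkQ = 0 := by linarith
  rw [h7] at h4
  linarith

theorem pfr_prob {z0 : G → ℝ} (hz : 0 ≤ z0) (mz : ms z0 = 1) :
    ∃ V : Submodule (ZMod 2) G, Hn z0 V.mkQ ≤ 36 * (E1 (cv z0 z0) - E1 z0) ∧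
      Real.log (Nat.card V) ≤ E1 z0 + 36 * (E1 (cv z0 z0) - E1 z0) := by
  obtain ⟨p, q, hp, hq, mp, mq, hmin⟩ := exists_min hz
  obtain ⟨h1, h2⟩ := minimiser_zero two_tor hz mz hp hq mp mq hmin
  have hstab : ∀ y y', q y ≠ 0 → q y' ≠ 0 → y - y' ∈ stab p := by
    intro y y' hy hy' x
    have := equality_case hp hq mp mq h1 (x + y) y' y hy' hy
    rw [show x + (y - y') = x + y - y' by abel, this, add_sub_cancel_right]
  let V : Submodule (ZMod 2) G := AddSubgroup.toZModSubmodule 2 (stab p)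
  have hinv : ∀ v ∈ V, ∀ x, p (x + v) = p x := fun v hv x => hv x
  obtain ⟨y0, hy0⟩ : ∃ y, q y ≠ 0 := by
    by_contra hcon
    push Not at hcon
    have : ms q = 0 := Finset.sum_eq_zero fun i _ => hcon i
    rw [mq] at this; norm_num at this
  have c1 := card_coset_le hq V y0 (fun y hy => hstab y y0 hy hy0)
  have c2 := E1_inv hp V hinv
  have c3 := E1_inv (cv_nonneg hz hp) V (fun v hv x => cv_inv z0 (hinv v hv) x)
  have c4 : ms p * Hn z0 V.mkQ ≤ Hn (cv z0 p) V.mkQ := by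
    rw [Hn_cv]; exact sum_ge hz hp V.mkQ.toAddMonoidHom
  have c5 := sum_ge_left hz hq
  have c6 := sum_ge_right hz hq
  have c7 := hmin z0 z0 hz hz
  have c8 := E1_le_proj hz V
  have n1 := Hn_nonneg hp V.mkQ
  have n2 := Hn_nonneg hz V.mkQ
  refine ⟨V, ?_, ?_⟩ <;>
  · simp only [phi, ms_cv, mp, mq, mz, one_mul, mul_one] at *
    linarith

theorem pfr_hom {z : G → ℝ} (hz : 0 ≤ z) :
    ∃ V : Submodule (ZMod 2) G, Hn z V.mkQ ≤ 36 * ((ms z)⁻¹ * E1 (cv z z) - E1 z) ∧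
      ms z * Real.log (Nat.card V) ≤ E1 z + 36 * ((ms z)⁻¹ * E1 (cv z z) - E1 z) := by
  by_cases h0 : ms z = 0
  · rw [E1_le_zero hz h0]
    exact ⟨⊥, by simp [Hn_zero, ms_zero, E1_zero], by simp [ms_zero, E1_zero]⟩
  have hm := ms_nonneg hz
  have hi := inv_nonneg.2 hm
  obtain ⟨V, h1, h2⟩ := pfr_prob (z0 := fun x => (ms z)⁻¹ * z x) (norm_dist hz h0).1 (norm_dist hz h0).2
  have h3 : 0 ≤ fun x => (ms z)⁻¹ * cv z z x := fun x => mul_nonneg hi (cv_nonneg hz hz x)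
  rw [Hn_smul hz hi, cv_smul_left, cv_smul_right, E1_smul h3 hi, E1_smul (cv_nonneg hz hz) hi, E1_smul hz hi] at h1
  rw [cv_smul_left, cv_smul_right, E1_smul h3 hi, E1_smul (cv_nonneg hz hz) hi, E1_smul hz hi] at h2
  refine ⟨V, ?_, ?_⟩
  · have := mul_le_mul_of_nonneg_left h1 hm
    have e : ms z * ((ms z)⁻¹ * Hn z V.mkQ) = Hn z V.mkQ := by field_simp
    rw [e] at this
    refine this.trans (le_of_eq ?_)
    field_simp
  · have := mul_le_mul_of_nonneg_left h2 hm
    refine this.trans (le_of_eq ?_)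
    field_simp

end pfr

set_option linter.unusedSectionVars false

section bridge
variable {G : Type} [AddCommGroup G] [Module (ZMod 2) G] [Fintype G]

theorem ent_eq {A : Type*} [Fintype A] {p : A → ℝ} (h : ms p = 1) : ent p = E1 p := by
  unfold ent
  rw [finsum_eq_sum_of_fintype, E1_eq, h]
  simp

theorem isDist_iff {A : Type*} [Fintype A] {p : A → ℝ} : IsDist p ↔ 0 ≤ p ∧ ms p = 1 := by
  unfold IsDist ms
  rw [finsum_eq_sum_of_fintype]
  rfl

theorem push_eq {A B : Type*} [Fintype A] (f : A → B) (p : A → ℝ) : push f p = pf f p := by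
  classical
  funext b
  unfold push pf
  rw [finsum_mem_def, finsum_eq_sum_of_fintype]
  refine Finset.sum_congr rfl fun a _ => ?_
  simp [Set.indicator]

theorem ms_pf {A B : Type*} [Fintype A] [Fintype B] (f : A → B) (p : A → ℝ) : ms (pf f p) = ms p := sum_pf f p

theorem conv_eq (p q : G → ℝ) : conv p q = cv p q := by
  funext z
  unfold conv
  rw [finsum_eq_sum_of_fintype, cv_comm, cv_apply]

theorem ent_push {A : Type*} [Finite A] (f : G → A) {p : G → ℝ} (h : ms p = 1) :
    ent (push f p) = Hn p f := by
  classical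
  haveI := Fintype.ofFinite A
  rw [push_eq, ent_eq (by rw [ms_pf, h])]
  exact Hn_pf _ _ _

theorem ent_conv {p q : G → ℝ} (hp : ms p = 1) (hq : ms q = 1) : ent (conv p q) = E1 (cv p q) := by
  rw [conv_eq, ent_eq (by rw [ms_cv, hp, hq, one_mul])]

theorem ent_conv_push (V : Submodule (ZMod 2) G) {p q : G → ℝ} (hp : ms p = 1) (hq : ms q = 1) :
    ent (conv (push V.mkQ p) (push V.mkQ q)) = Hn (pw p q) (fun z => V.mkQ (z.1 + z.2)) := by
  classical
  haveI := Fintype.ofFinite (G ⧸ V)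
  rw [push_eq, push_eq, ent_conv (by rw [ms_pf, hp]) (by rw [ms_pf, hq]), E1_cv, pw_pf, Hn_pf]
  simp only [map_add]

theorem ent_unif (V : Submodule (ZMod 2) G) : ent (unifOn (V : Set G)) = Real.log (Nat.card V) := by
  classical
  have hu := uV_nonneg V
  have e : unifOn (V : Set G) = uV V := by
    funext x
    unfold unifOn uV
    simp [Set.indicator]
  rw [e, ent_eq (ms_uV V)]
  have hinv : ∀ v ∈ V, ∀ x, uV V (x + v) = uV V x := by
    intro v hv x; unfold uV
    have e : x + v ∈ V ↔ x ∈ V := Submodule.add_mem_iff_left V hv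
    by_cases h : x ∈ V
    · rw [if_pos h, if_pos (e.2 h)]
    · rw [if_neg h, if_neg (fun h' => h (e.1 h'))]
  have h1 := E1_inv hu V hinv
  have h2 := card_coset_le hu V 0 (by
    intro y hy; by_contra h; apply hy; unfold uV; rw [if_neg (by simpa using h)])
  have h6 := Hn_nonneg hu V.mkQ
  rw [ms_uV] at h1 h2
  linarith

theorem mkQ_eq_iff (V : Submodule (ZMod 2) G) (x y : G) : V.mkQ x = V.mkQ y ↔ x - y ∈ V :=
  Submodule.Quotient.eq V

theorem log_card_comap {H : Type} [AddCommGroup H] [Module (ZMod 2) H] [Fintype H] (f : G →ₗ[ZMod 2] H)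
    (hf : Function.Surjective f) (W : Submodule (ZMod 2) H) :
    Real.log (Nat.card (W.comap f)) = Real.log (Nat.card (LinearMap.ker f)) + Real.log (Nat.card W) := by
  classical
  have e1 := card_pos (LinearMap.ker f)
  have e2 := card_pos W
  rw [← Real.log_mul e1.ne' e2.ne', ← Nat.cast_mul]
  congr 2
  let g : W.comap f →ₗ[ZMod 2] W := f.restrict (p := W.comap f) (q := W) (fun x hx => hx)
  have hg : Function.Surjective g := by
    rintro ⟨y, hy⟩
    obtain ⟨x, rfl⟩ := hf y
    exact ⟨⟨x, hy⟩, rfl⟩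
  have h1 := Submodule.card_eq_card_quotient_mul_card (LinearMap.ker g)
  rw [h1, Nat.card_congr (g.quotKerEquivOfSurjective hg).toEquiv]
  congr 1
  refine Nat.card_congr ⟨fun x => ⟨x.1.1, ?_⟩, fun x => ⟨⟨x.1, ?_⟩, ?_⟩, fun _ => rfl, fun _ => rfl⟩
  · exact congrArg Subtype.val x.2
  · have : f x.1 = 0 := x.2
    change f x.1 ∈ W
    rw [this]; exact W.zero_mem
  · exact Subtype.ext x.2

theorem Hn_comap {A : Type*} {H : Type} [AddCommGroup H] [Module (ZMod 2) H] [Fintype H] (f : G →ₗ[ZMod 2] H)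
    (W : Submodule (ZMod 2) H) {Ω : Type*} [Fintype Ω] (P : Ω → ℝ) (X : Ω → G) :
    Hn P (fun ω => (W.comap f).mkQ (X ω)) = Hn P (fun ω => W.mkQ (f (X ω))) := by
  refine Hn_congr fun a b => ?_
  rw [mkQ_eq_iff, mkQ_eq_iff, ← map_sub]
  rfl

/-- relative version of B -/
def Brel (η ε L : ℝ) : Prop := ∀ (G : Type) [AddCommGroup G] [Module (ZMod 2) G] [Fintype G]
  (p q : G → ℝ) (V : Submodule (ZMod 2) G), 0 ≤ p → 0 ≤ q →
  ∃ V' : Submodule (ZMod 2) G, V ≤ V' ∧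
    ms p * ms q * (Real.log (Nat.card V') - Real.log (Nat.card V)) ≤ L * (ms q * Hn p V.mkQ + ms p * Hn q V.mkQ) ∧
    (1 - η) * (ms q * Hn p V'.mkQ + ms p * Hn q V'.mkQ) - ε * (ms q * Hn p V.mkQ + ms p * Hn q V.mkQ)
      ≤ Hn (pw p q) (fun z => V'.mkQ (z.1 + z.2))

theorem Brel_prob {η ε L : ℝ} (hB : StB η ε L) (p q : G → ℝ) (V : Submodule (ZMod 2) G)
    (hp : 0 ≤ p) (hq : 0 ≤ q) (mp : ms p = 1) (mq : ms q = 1) :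
  ∃ V' : Submodule (ZMod 2) G, V ≤ V' ∧
    Real.log (Nat.card V') - Real.log (Nat.card V) ≤ L * (Hn p V.mkQ + Hn q V.mkQ) ∧
    (1 - η) * (Hn p V'.mkQ + Hn q V'.mkQ) - ε * (Hn p V.mkQ + Hn q V.mkQ)
      ≤ Hn (pw p q) (fun z => V'.mkQ (z.1 + z.2)) := by
  classical
  let e := (Module.finBasis (ZMod 2) (G ⧸ V)).equivFun
  let f : G →ₗ[ZMod 2] Fvec (Module.finrank (ZMod 2) (G ⧸ V)) := e.toLinearMap.comp V.mkQ
  have hf : Function.Surjective f := e.surjective.comp V.mkQ_surjective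
  have hker : LinearMap.ker f = V := by
    rw [LinearEquiv.ker_comp, Submodule.ker_mkQ]
  obtain ⟨W, h1, h2⟩ := hB _ (pf f p) (pf f q) (isDist_iff.2 ⟨pf_nonneg _ hp, by rw [ms_pf, mp]⟩)
    (isDist_iff.2 ⟨pf_nonneg _ hq, by rw [ms_pf, mq]⟩)
  have mp' : ms (pf f p) = 1 := by rw [ms_pf, mp]
  have mq' : ms (pf f q) = 1 := by rw [ms_pf, mq]
  have k : ∀ r : G → ℝ, E1 (pf f r) = Hn r V.mkQ := by
    intro r
    unfold E1
    rw [Hn_pf]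
    exact Hn_congr fun a b => e.injective.eq_iff
  have k2 : ∀ r : G → ℝ, Hn (pf f r) W.mkQ = Hn r (W.comap f).mkQ := by
    intro r
    rw [Hn_pf]
    exact (Hn_comap (A := Unit) f W r (fun x => x)).symm
  rw [ent_unif, ent_eq mp', ent_eq mq', k, k] at h1
  rw [ent_conv_push W mp' mq', ent_push _ mp', ent_push _ mq', ent_eq mp', ent_eq mq', k, k, k2, k2,
    pw_pf, Hn_pf] at h2
  refine ⟨W.comap f, ?_, ?_, ?_⟩
  · conv_lhs => rw [← hker]
    intro x hx
    have : f x = 0 := hx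
    change f x ∈ W
    rw [this]; exact W.zero_mem
  · rw [log_card_comap f hf, hker]; linarith
  · have := Hn_comap (A := Unit) f W (pw p q) (fun z => z.1 + z.2)
    rw [this]
    simpa only [map_add] using h2

theorem brel {η ε L : ℝ} (hB : StB η ε L) : Brel η ε L := by
  intro G _ _ _ p q V hp hq
  by_cases h1 : ms p = 0
  · have hz : pw (0 : G → ℝ) q = 0 := by funext z; simp [pw]
    refine ⟨V, le_rfl, ?_, ?_⟩ <;> rw [E1_le_zero hp h1] <;> simp [ms_zero, Hn_zero, hz]
  by_cases h2 : ms q = 0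
  · have hz : pw p (0 : G → ℝ) = 0 := by funext z; simp [pw]
    refine ⟨V, le_rfl, ?_, ?_⟩ <;> rw [E1_le_zero hq h2] <;> simp [ms_zero, Hn_zero, hz]
  have a1 := inv_nonneg.2 (ms_nonneg hp)
  have a2 := inv_nonneg.2 (ms_nonneg hq)
  have a3 := mul_nonneg (ms_nonneg hp) (ms_nonneg hq)
  obtain ⟨V', g1, g2, g3⟩ := Brel_prob hB (fun x => (ms p)⁻¹ * p x) (fun x => (ms q)⁻¹ * q x) V
    (norm_dist hp h1).1 (norm_dist hq h2).1 (norm_dist hp h1).2 (norm_dist hq h2).2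
  have e : pw (fun x => (ms p)⁻¹ * p x) (fun x => (ms q)⁻¹ * q x) =
      fun z => ((ms p)⁻¹ * (ms q)⁻¹) * pw p q z := by funext z; simp [pw]; ring
  rw [Hn_smul hp a1, Hn_smul hq a2] at g2
  rw [Hn_smul hp a1, Hn_smul hq a2, Hn_smul hp a1, Hn_smul hq a2, e,
    Hn_smul (pw_nonneg hp hq) (mul_nonneg a1 a2)] at g3
  refine ⟨V', g1, ?_, ?_⟩
  · refine (mul_le_mul_of_nonneg_left g2 a3).trans (le_of_eq ?_)
    field_simp
  · have := mul_le_mul_of_nonneg_left g3 a3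
    refine le_trans (le_of_eq ?_) (this.trans (le_of_eq ?_))
    · field_simp
    · field_simp

end bridge

set_option linter.unusedSectionVars false

section stages
variable {G : Type} [AddCommGroup G] [Module (ZMod 2) G] [Fintype G]

/-- doubling mass modulo `V` -/
def sdV (V : Submodule (ZMod 2) G) (p q : G → ℝ) : ℝ :=
  ms q * Hn p V.mkQ + ms p * Hn q V.mkQ - Hn (pw p q) (fun z => V.mkQ (z.1 + z.2))

theorem pw_swap_Hn {A : Type*} (f : G → A) (p q : G → ℝ) :
    Hn (pw p q) (fun z => f (z.1 + z.2)) = Hn (pw q p) (fun z => f (z.1 + z.2)) := by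
  rw [← Hn_cv, ← Hn_cv, cv_comm]

theorem mkQ_mono {V W : Submodule (ZMod 2) G} (h : V ≤ W) (x y : G) (hx : V.mkQ x = V.mkQ y) :
    W.mkQ x = W.mkQ y := by
  rw [mkQ_eq_iff] at *; exact h hx

theorem sd_le_sdV {p q : G → ℝ} (hp : 0 ≤ p) (hq : 0 ≤ q) (V : Submodule (ZMod 2) G) :
    sd p q ≤ sdV V p q + ms q * (E1 p - Hn p V.mkQ) := by
  have h := proj_ineq hp hq (AddMonoidHom.id G) V.mkQ.toAddMonoidHom (by intro x y h; simp at h; rw [h])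
  simp only [AddMonoidHom.id_apply] at h
  rw [← E1_cv] at h
  have e : Hn q (AddMonoidHom.id G) = E1 q := rfl
  rw [e] at h
  have h : Hn (pw p q) (fun z => V.mkQ (z.1 + z.2)) + ms p * E1 q ≤ E1 (cv p q) + ms p * Hn q V.mkQ := h
  unfold sd sdV
  linarith

theorem Hn_le_E1 {p : G → ℝ} (hp : 0 ≤ p) (V : Submodule (ZMod 2) G) : Hn p V.mkQ ≤ E1 p :=
  Hn_mono hp (by intro a b h; have h' : a = b := h
                 rw [h'])

theorem pair_lemma {η δ L θ lam : ℝ} (hB : Brel η δ L) (hη : 0 ≤ η) (hlam : 0 ≤ lam) (hθ : lam * L ≤ θ)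
    {r s : G → ℝ} (hr : 0 ≤ r) (hs : 0 ≤ s) (V : Submodule (ZMod 2) G)
    (hmin : ∀ V' : Submodule (ZMod 2) G, V ≤ V' → Hn s V.mkQ - Hn s V'.mkQ
      ≤ lam * ms s * (Real.log (Nat.card V') - Real.log (Nat.card V))) :
    sdV V r s ≤ (η + δ + θ) * (ms s * Hn r V.mkQ + ms r * Hn s V.mkQ) := by
  obtain ⟨V', h1, h2, h3⟩ := hB G r s V hr hs
  have h4 := hmin V' h1
  have h5 := proj_ineq hs hr V.mkQ.toAddMonoidHom V'.mkQ.toAddMonoidHom (mkQ_mono h1)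
  have h5 : Hn (pw s r) (fun z => V'.mkQ (z.1 + z.2)) + ms s * Hn r V.mkQ ≤
    Hn (pw s r) (fun z => V.mkQ (z.1 + z.2)) + ms s * Hn r V'.mkQ := h5
  rw [pw_swap_Hn V'.mkQ, pw_swap_Hn V.mkQ] at h5
  have mr := ms_nonneg hr
  have mss := ms_nonneg hs
  have m1 : Hn r V'.mkQ ≤ Hn r V.mkQ := Hn_mono hr (mkQ_mono h1)
  have m2 : Hn s V'.mkQ ≤ Hn s V.mkQ := Hn_mono hs (mkQ_mono h1)
  have n1 := mul_le_mul_of_nonneg_left m1 mss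
  have n2 := mul_le_mul_of_nonneg_left m2 mr
  have hBn : 0 ≤ ms s * Hn r V.mkQ + ms r * Hn s V.mkQ :=
    add_nonneg (mul_nonneg mss (Hn_nonneg hr _)) (mul_nonneg mr (Hn_nonneg hs _))
  set B := ms s * Hn r V.mkQ + ms r * Hn s V.mkQ with hBdef
  have h6 : ms r * (Hn s V.mkQ - Hn s V'.mkQ) ≤ θ * B := by
    calc _ ≤ ms r * (lam * ms s * (Real.log (Nat.card V') - Real.log (Nat.card V))) := by gcongr
      _ = lam * (ms r * ms s * (Real.log (Nat.card V') - Real.log (Nat.card V))) := by ring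
      _ ≤ lam * (L * B) := by gcongr
      _ = (lam * L) * B := by ring
      _ ≤ θ * B := by gcongr
  have h7 : η * (ms s * Hn r V'.mkQ + ms r * Hn s V'.mkQ) ≤ η * B := by
    apply mul_le_mul_of_nonneg_left _ hη
    linarith
  unfold sdV
  rw [← hBdef]
  nlinarith

theorem exists_min_sub (F : Submodule (ZMod 2) G → ℝ) : ∃ V, ∀ W, F V ≤ F W := by
  obtain ⟨V, hV⟩ := Finite.exists_min F
  exact ⟨V, hV⟩

theorem Hn_bot (p : G → ℝ) : Hn p (⊥ : Submodule (ZMod 2) G).mkQ = E1 p := by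
  unfold E1
  refine Hn_congr fun a b => ?_
  rw [mkQ_eq_iff, Submodule.mem_bot, sub_eq_zero]

theorem log_bot : Real.log (Nat.card (⊥ : Submodule (ZMod 2) G)) = 0 := by simp

theorem fibre_lemma {η δ L M h0 : ℝ} (hB : Brel η δ L) (hη : 0 ≤ η) (hδ : 0 < δ) (hL : L ≤ M) (hM : 1 ≤ M)
    {p q : G → ℝ} (hp : 0 ≤ p) (hq : 0 ≤ q) (hpq : E1 p + E1 q ≤ h0)
    (ha : ∀ V : Submodule (ZMod 2) G, Real.log (Nat.card V) ≤ M * h0 / (3 * δ ^ 2) →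
      E1 p - Hn p V.mkQ ≤ δ * h0)
    {T T' : Type} [Fintype T] [Fintype T'] (r : T → G → ℝ) (r' : T' → G → ℝ) (hr : ∀ u, 0 ≤ r u)
    (hr' : ∀ w, 0 ≤ r' w) (sr : (fun x => ∑ u, r u x) = p) (sr' : (fun x => ∑ w, r' w x) = q)
    (mp : ms p = 1) (mq : ms q = 1) :
    ∑ u, ∑ w, sd (r u) (r' w) ≤ η * (∑ u, E1 (r u) + ∑ w, E1 (r' w)) + 6 * δ * h0 := by
  have hEp : 0 ≤ E1 p := Hn_nonneg hp _
  have hEq : 0 ≤ E1 q := Hn_nonneg hq _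
  have hh0 : 0 ≤ h0 := by linarith
  have f1 : ∑ u, E1 (r u) ≤ E1 p := by
    have := fam_le hr (fun x => x); rw [sr] at this; exact this
  have f2 : ∑ w, E1 (r' w) ≤ E1 q := by
    have := fam_le hr' (fun x => x); rw [sr'] at this; exact this
  have m1 : ∑ u, ms (r u) = 1 := by
    rw [← mp, ← sr]; unfold ms; rw [Finset.sum_comm]
  have m2 : ∑ w, ms (r' w) = 1 := by
    rw [← mq, ← sr']; unfold ms; rw [Finset.sum_comm]
  by_contra hcon
  push Not at hcon
  have hex : ∃ w ∈ Finset.univ, 0 < ∑ u, sd (r u) (r' w) - η * (ms (r' w) * ∑ u, E1 (r u) + E1 (r' w))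
      - 3 * δ * (h0 * ms (r' w) + E1 (r' w)) := by
    apply Finset.exists_lt_of_sum_lt
    rw [Finset.sum_const_zero]
    simp only [Finset.sum_add_distrib, Finset.sum_sub_distrib, ← Finset.mul_sum, ← Finset.sum_mul, m2]
    rw [Finset.sum_comm]
    have : 3 * δ * (h0 * 1 + ∑ w, E1 (r' w)) ≤ 6 * δ * h0 := by
      have : 3 * δ * (h0 * 1 + ∑ w, E1 (r' w)) ≤ 3 * δ * (h0 * 1 + h0) := by
        gcongr; linarith
      linarith
    linarith
  obtain ⟨w, _, hw⟩ := hex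
  have hs := hr' w
  set s := r' w with hsdef
  have hms := ms_nonneg hs
  have hEs : 0 ≤ E1 s := Hn_nonneg hs _
  have hEr : 0 ≤ ∑ u, E1 (r u) := Finset.sum_nonneg fun u _ => Hn_nonneg (hr u) _
  have hmpos : 0 < ms s := by
    rcases hms.eq_or_lt with h | h
    · exfalso
      have : s = 0 := E1_le_zero hs h.symm
      rw [this] at hw
      simp [sd, E1_zero, ms_zero, cv_zero_right] at hw
    · exact h
  have hsd : ∑ u, sd (r u) s ≤ ms s * ∑ u, E1 (r u) := by
    rw [Finset.mul_sum]
    exact Finset.sum_le_sum fun u _ => sd_le_left (hr u) hs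
  have hEs2 : 3 * δ * E1 s ≤ ms s * h0 := by
    have a1 : ms s * ∑ u, E1 (r u) ≤ ms s * h0 := by gcongr; linarith
    have a2 : 0 ≤ η * (ms s * ∑ u, E1 (r u) + E1 s) := by positivity
    have a3 : 0 ≤ δ * (h0 * ms s) := by positivity
    nlinarith
  -- the minimising subspace
  have hM0 : 0 < M := by linarith
  obtain ⟨V, hV⟩ := exists_min_sub (G := G) (fun V => Hn s V.mkQ + δ / M * ms s * Real.log (Nat.card V))
  have hV0 := hV ⊥
  simp only [Hn_bot, log_bot, mul_zero, add_zero] at hV0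
  have hlog : Real.log (Nat.card V) ≤ M * h0 / (3 * δ ^ 2) := by
    have n := Hn_nonneg hs V.mkQ
    have a1 : δ / M * ms s * Real.log (Nat.card V) ≤ E1 s := by linarith
    have a2 : 3 * δ * (δ / M * ms s * Real.log (Nat.card V)) ≤ ms s * h0 :=
      le_trans (by gcongr) hEs2
    rw [le_div_iff₀ (by positivity)]
    have a3 : ms s * (Real.log (Nat.card V) * (3 * δ ^ 2)) ≤ ms s * (M * h0) := by
      calc _ = M * (3 * δ * (δ / M * ms s * Real.log (Nat.card V))) := by field_simp
        _ ≤ M * (ms s * h0) := by gcongr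
        _ = _ := by ring
    exact le_of_mul_le_mul_left a3 hmpos
  have hgain := ha V hlog
  have hpair : ∀ u, sd (r u) s ≤ η * (ms s * E1 (r u) + ms (r u) * E1 s)
      + 2 * δ * (ms s * E1 (r u) + ms (r u) * E1 s) + ms s * (E1 (r u) - Hn (r u) V.mkQ) := by
    intro u
    have k1 := sd_le_sdV (hr u) hs V
    have k2 := pair_lemma (lam := δ / M) (θ := δ) hB hη (by positivity) (by
      rw [div_mul_eq_mul_div, div_le_iff₀ hM0]; gcongr) (hr u) hs V (by
      intro V' _
      have : Hn s V.mkQ + δ / M * ms s * Real.log (Nat.card V)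
        ≤ Hn s V'.mkQ + δ / M * ms s * Real.log (Nat.card V') := hV V'
      linarith)
    have k3 : ms s * Hn (r u) V.mkQ + ms (r u) * Hn s V.mkQ ≤ ms s * E1 (r u) + ms (r u) * E1 s :=
      add_le_add (mul_le_mul_of_nonneg_left (Hn_le_E1 (hr u) V) hms)
        (mul_le_mul_of_nonneg_left (Hn_le_E1 hs V) (ms_nonneg (hr u)))
    have k4 : (η + δ + δ) * (ms s * Hn (r u) V.mkQ + ms (r u) * Hn s V.mkQ)
      ≤ (η + δ + δ) * (ms s * E1 (r u) + ms (r u) * E1 s) := by gcongr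
    linarith
  have hsum := Finset.sum_le_sum fun u (_ : u ∈ Finset.univ) => hpair u
  have hdiff := fam_diff hr (fun x => x) V.mkQ (by intro x y h; rw [h])
  rw [sr] at hdiff
  have hdiff : ∑ u, (E1 (r u) - Hn (r u) V.mkQ) ≤ E1 p - Hn p V.mkQ := hdiff
  simp only [Finset.sum_add_distrib, ← Finset.mul_sum, ← Finset.sum_mul, m1, one_mul] at hsum
  have b1 : ms s * ∑ u, (E1 (r u) - Hn (r u) V.mkQ) ≤ ms s * (δ * h0) := by gcongr; linarith
  have b2 : ms s * ∑ u, E1 (r u) ≤ ms s * h0 := by gcongr; linarith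
  nlinarith

end stages

set_option linter.unusedSectionVars false

section core
variable {G : Type} [AddCommGroup G] [Module (ZMod 2) G] [Fintype G]

theorem aux_bound {l M h δ : ℝ} (hδ : 0 < δ) (hl : 0 ≤ l) (hM : 1 ≤ M) (hh : 0 < h) (hδ1 : δ ≤ 1)
    (H : 16384 * (δ * l) ≤ h) : l ≤ 16384 * (M * h / δ ^ 2) := by
  rw [← mul_div_assoc, le_div_iff₀ (by positivity)]
  have y1 : h ≤ M * h := by nlinarith
  have y0 : 0 ≤ δ * l := by positivity
  have y2 : δ * (δ * l) ≤ 1 * (δ * l) := by gcongr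
  linarith

set_option maxHeartbeats 1000000 in
theorem core {η δ L M h0 : ℝ} (hB : Brel η δ L) (hη : 0 < η) (hη2 : η ≤ 1 / 2) (hδη : η ^ 2 = 32768 * δ)
    (hδ : 0 < δ) (hL : L ≤ M) (hM : 1 ≤ M) (hh0 : 0 < h0)
    {p q : G → ℝ} (hp : 0 ≤ p) (hq : 0 ≤ q) (mp : ms p = 1) (mq : ms q = 1) (hpq : E1 p + E1 q ≤ h0)
    (hs : (η - 2 * δ) * h0 ≤ sd p q)
    (h1 : sd (cv p p) (cv q q) ≤ η * (E1 (cv p p) + E1 (cv q q)) + 3 * δ * h0)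
    (h2 : sd (cv p q) (cv q p) ≤ η * (E1 (cv p q) + E1 (cv q p)) + 3 * δ * h0) :
    ∃ V : Submodule (ZMod 2) G, Real.log (Nat.card V) ≤ 16384 * (M * h0 / δ ^ 2) ∧
      δ * h0 < E1 p - Hn p V.mkQ := by
  by_contra hcon
  push Not at hcon
  have hX : 0 ≤ M * h0 / δ ^ 2 := by positivity
  have ha : ∀ V : Submodule (ZMod 2) G, Real.log (Nat.card V) ≤ M * h0 / (3 * δ ^ 2) →
      E1 p - Hn p V.mkQ ≤ δ * h0 := by
    intro V hV
    refine hcon V (hV.trans ?_)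
    have : M * h0 / (3 * δ ^ 2) = (M * h0 / δ ^ 2) / 3 := by field_simp
    rw [this]; linarith
  have F1 := fibre_lemma hB hη.le hδ hL hM hp hq hpq ha (fw p p) (fw q q) (fw_nonneg hp hp)
    (fw_nonneg hq hq) (sum_fw' mp) (sum_fw' mq) mp mq
  have F2 := fibre_lemma hB hη.le hδ hL hM hp hq hpq ha (fw p q) (fw q p) (fw_nonneg hp hq)
    (fw_nonneg hq hp) (sum_fw' mq) (sum_fw' mp) mp mq
  have S2 := sum_sd_fw hp hq hq hp mp mq mq mp
  rw [sum_sd_fw hp hp hq hq mp mp mq mq, sum_E1_fw hp hp, sum_E1_fw hq hq] at F1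
  rw [sum_E1_fw hp hq, sum_E1_fw hq hp] at F2
  have K := bsg two_tor hp hq hq hp mp mq mq mp
  have kap : ∀ t, 0 ≤ (ms (Zf p q q p t))⁻¹ * E1 (cv (Zf p q q p t) (Zf p q q p t)) - E1 (Zf p q q p t) := by
    intro t
    have hz := Zf_nonneg hp hq hq hp t
    rcases (ms_nonneg hz).eq_or_lt with h | h
    · rw [E1_le_zero hz h.symm]; simp [E1_zero, ms_zero]
    · have := sum_ge_left hz hz
      rw [sub_nonneg, inv_mul_eq_div, le_div_iff₀ h]; linarith
  have eS : cv (cv p q) (cv q p) = cv (cv p p) (cv q q) := by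
    rw [cv_assoc, cv_assoc, ← cv_assoc q q p, cv_comm (cv q q) p]
  have K0 := Finset.sum_nonneg fun t (_ : t ∈ Finset.univ) => kap t
  rw [J4_symm two_tor, eS] at K
  rw [J4_symm two_tor] at S2
  rw [S2] at F2
  have sqp : sd q p = sd p q := by unfold sd; rw [cv_comm]; ring
  have d0 : sd p q = E1 p + E1 q - E1 (cv p q) := by unfold sd; rw [mp, mq]; ring
  have d1 : sd p p = 2 * E1 p - E1 (cv p p) := by unfold sd; rw [mp]; ring
  have d2 : sd q q = 2 * E1 q - E1 (cv q q) := by unfold sd; rw [mq]; ring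
  have d3 : sd (cv p p) (cv q q) = E1 (cv p p) + E1 (cv q q) - E1 (cv (cv p p) (cv q q)) := by
    unfold sd; simp only [ms_cv, mp, mq]; ring
  have d4 : sd (cv p q) (cv q p) = 2 * E1 (cv p q) - E1 (cv (cv p p) (cv q q)) := by
    unfold sd; rw [eS, cv_comm q p]; simp only [ms_cv, mp, mq]; ring
  rw [d4, cv_comm q p] at h2
  rw [d3] at h1
  rw [d1, d2] at F1
  rw [sqp, cv_comm q p] at F2 S2
  rw [cv_comm q p] at K
  set κ : G × G → ℝ := fun t => (ms (Zf p q q p t))⁻¹ * E1 (cv (Zf p q q p t) (Zf p q q p t)) - E1 (Zf p q q p t)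
  have K0 : 0 ≤ ∑ t, κ t := K0
  have K : ∑ t, κ t ≤ _ := K
  rw [d0] at F2 hs S2
  set a := E1 (cv p q)
  set b1 := E1 (cv p p)
  set b2 := E1 (cv q q)
  set S := E1 (cv (cv p p) (cv q q))
  set J := J4 p p q q
  have hη0 : η * (E1 p + E1 q) ≤ η * h0 := by gcongr
  have I1 : 2 * a + (b1 + b2) - J - S ≤ 13 * δ * h0 := by linarith
  have I2 : 4 * a - J - S ≤ 13 * δ * h0 := by linarith
  have K39 : ∑ t, κ t ≤ 39 * δ * h0 := by linarith
  have I2' : -26 * δ * h0 ≤ 4 * a - J - S := by linarith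
  have SF : (2 * η ^ 2 - 35 * δ) * h0 ≤ 2 * (E1 p + E1 q) - J := by
    have e1 : η * (E1 p + E1 q - a) ≥ η * ((η - 2 * δ) * h0) := by
      apply mul_le_mul_of_nonneg_left hs hη.le
    have e2 : η * (δ * h0) ≤ 1 / 2 * (δ * h0) := by gcongr
    linarith
  -- choose fibre subspaces
  have hV : ∀ t, ∃ V : Submodule (ZMod 2) G, Hn (Zf p q q p t) V.mkQ ≤ 36 * κ t ∧
      ms (Zf p q q p t) * Real.log (Nat.card V) ≤ E1 (Zf p q q p t) + 36 * κ t :=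
    fun t => pfr_hom (Zf_nonneg hp hq hq hp t)
  choose V V1 V2 using hV
  have mfw : ∑ u, ms (fw p q u) = 1 := by rw [sum_ms_fw, mp, mq, one_mul]
  have hg : ∀ t, ms (fw p q t.1) * ∑ u, sd (fw p q u) (fw q p t.2) ≤
      ms (Zf p q q p t) * (E1 p - Hn p (V t).mkQ) + 36 * κ t := by
    intro t
    have hz := Zf_nonneg hp hq hq hp t
    have i1 : ∀ u, ms (fw p q t.1) * sd (fw p q u) (fw q p t.2) ≤
        ms (Zf p q q p t) * (E1 (fw p q u) - Hn (fw p q u) (V t).mkQ)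
          + ms (fw p q u) * Hn (Zf p q q p t) (V t).mkQ := by
      intro u
      have j1 := sd_cv (fw_nonneg hp hq u) (fw_nonneg hq hp t.2) (fw_nonneg hp hq t.1)
      have j2 := sd_proj (fw_nonneg hp hq u) hz (V t).mkQ.toAddMonoidHom
      exact j1.trans j2
    have i2 := Finset.sum_le_sum fun u (_ : u ∈ Finset.univ) => i1 u
    rw [← Finset.mul_sum, Finset.sum_add_distrib, ← Finset.mul_sum, ← Finset.sum_mul, mfw, one_mul] at i2
    have i3 := fam_diff (fw_nonneg hp hq) (fun x => x) (V t).mkQ (by intro x y h; rw [h])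
    rw [sum_fw' mq] at i3
    have i3 : ∑ u, (E1 (fw p q u) - Hn (fw p q u) (V t).mkQ) ≤ E1 p - Hn p (V t).mkQ := i3
    have i4 := mul_le_mul_of_nonneg_left i3 (ms_nonneg hz)
    linarith [V1 t]
  have hgs : ∑ t : G × G, ms (fw p q t.1) * ∑ u, sd (fw p q u) (fw q p t.2) = 2 * (E1 p + E1 q) - J := by
    rw [Fintype.sum_prod_type]
    simp only [← Finset.mul_sum]
    rw [← Finset.sum_mul, mfw, one_mul, Finset.sum_comm, S2]
    ring
  have hZs : ∑ t, E1 (Zf p q q p t) ≤ h0 := by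
    have := fam_le (Zf_nonneg hp hq hq hp) (fun x => x)
    rw [sum_Zf mq mp] at this
    have this : ∑ t, E1 (Zf p q q p t) ≤ a := this
    have : 0 ≤ (η - 2 * δ) * h0 := by
      apply mul_nonneg _ hh0.le
      nlinarith
    linarith
  have hms := sum_ms_Zf mp mq mq mp
  have hex : ∃ t ∈ Finset.univ, 0 < ms (fw p q t.1) * ∑ u, sd (fw p q u) (fw q p t.2) - 36 * κ t
      - η ^ 2 / 2 * (E1 (Zf p q q p t) + 36 * κ t) - δ * h0 * ms (Zf p q q p t) := by
    apply Finset.exists_lt_of_sum_lt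
    rw [Finset.sum_const_zero, Finset.sum_sub_distrib, Finset.sum_sub_distrib, Finset.sum_sub_distrib, hgs,
      ← Finset.mul_sum, ← Finset.mul_sum, ← Finset.mul_sum, Finset.sum_add_distrib, ← Finset.mul_sum, hms]
    have q1 : η ^ 2 / 2 * (∑ t, E1 (Zf p q q p t) + 36 * ∑ t, κ t) ≤ η ^ 2 / 2 * (h0 + 36 * ∑ t, κ t) := by
      gcongr
    have q2 : η ^ 2 / 2 * ∑ t, κ t ≤ 1 / 8 * ∑ t, κ t := by
      refine mul_le_mul_of_nonneg_right ?_ K0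
      have := pow_le_pow_left₀ hη.le hη2 2
      linarith
    have q3 : 0 < δ * h0 := by positivity
    have q4 : η ^ 2 * h0 = 32768 * (δ * h0) := by rw [hδη]; ring
    linarith
  obtain ⟨t, _, ht⟩ := hex
  have hz := Zf_nonneg hp hq hq hp t
  have hEz : 0 ≤ E1 (Zf p q q p t) := Hn_nonneg hz _
  have hk : 0 ≤ κ t := kap t
  have hgt := hg t
  have hpos : 0 < ms (Zf p q q p t) := by
    rcases (ms_nonneg hz).eq_or_lt with h | h
    · exfalso
      rw [← h] at hgt ht
      have : 0 ≤ η ^ 2 / 2 * (E1 (Zf p q q p t) + 36 * κ t) := by positivity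
      linarith
    · exact h
  have hgain : δ * h0 < E1 p - Hn p (V t).mkQ := by
    have : 0 ≤ η ^ 2 / 2 * (E1 (Zf p q q p t) + 36 * κ t) := by positivity
    have : ms (Zf p q q p t) * (δ * h0) < ms (Zf p q q p t) * (E1 p - Hn p (V t).mkQ) := by linarith
    exact lt_of_mul_lt_mul_left this hpos.le
  have hEq : 0 ≤ E1 q := Hn_nonneg hq _
  have hHp : 0 ≤ Hn p (V t).mkQ := Hn_nonneg hp _
  have hlog : η ^ 2 / 2 * Real.log (Nat.card (V t)) ≤ h0 := by
    have z1 : η ^ 2 / 2 * (ms (Zf p q q p t) * Real.log (Nat.card (V t)))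
      ≤ η ^ 2 / 2 * (E1 (Zf p q q p t) + 36 * κ t) :=
      mul_le_mul_of_nonneg_left (V2 t) (by positivity)
    have z2 : ms (Zf p q q p t) * (E1 p - Hn p (V t).mkQ) ≤ ms (Zf p q q p t) * h0 := by
      gcongr; linarith
    have z3 : 0 ≤ δ * h0 * ms (Zf p q q p t) := by positivity
    have : ms (Zf p q q p t) * (η ^ 2 / 2 * Real.log (Nat.card (V t))) ≤ ms (Zf p q q p t) * h0 := by linarith
    exact le_of_mul_le_mul_left this hpos
  have hfin : Real.log (Nat.card (V t)) ≤ 16384 * (M * h0 / δ ^ 2) := by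
    exact aux_bound hδ (log_card_nonneg (V t)) hM hh0 (by
      have := pow_le_pow_left₀ hη.le hη2 2
      linarith) (by rw [hδη] at hlog; linarith)
  exact absurd (hcon (V t) hfin) (not_le.2 hgain)

end core

set_option linter.unusedSectionVars false

section final
variable {G : Type} [AddCommGroup G] [Module (ZMod 2) G] [Fintype G]

theorem pf_cv (V : Submodule (ZMod 2) G) [Fintype (G ⧸ V)] (p q : G → ℝ) :
    cv (pf V.mkQ p) (pf V.mkQ q) = pf V.mkQ (cv p q) := by
  unfold cv
  rw [pw_pf, pf_pf, pf_pf]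
  simp only [map_add]

theorem E1_pf (V : Submodule (ZMod 2) G) [Fintype (G ⧸ V)] (p : G → ℝ) :
    E1 (pf V.mkQ p) = Hn p V.mkQ := Hn_pf _ _ _

theorem sd_pf (V : Submodule (ZMod 2) G) [Fintype (G ⧸ V)] (p q : G → ℝ) :
    sd (pf V.mkQ p) (pf V.mkQ q) = sdV V p q := by
  unfold sd sdV
  rw [pf_cv, E1_pf, E1_pf, E1_pf, ms_pf, ms_pf, Hn_cv]

theorem sdV_comm (V : Submodule (ZMod 2) G) (p q : G → ℝ) : sdV V p q = sdV V q p := by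
  unfold sdV; rw [pw_swap_Hn]; ring

set_option maxHeartbeats 1000000 in
theorem stageOne {η δ L M h0 : ℝ} (hB : Brel η δ L) (hη : 0 < η) (hη2 : η ≤ 1 / 2) (hδη : η ^ 2 = 32768 * δ)
    (hδ : 0 < δ) (hL : L ≤ M) (hM : 1 ≤ M) (hh0 : 0 < h0)
    {p q : G → ℝ} (hp : 0 ≤ p) (hq : 0 ≤ q) (mp : ms p = 1) (mq : ms q = 1) (hpq : E1 p + E1 q = h0)
    (hs : (η - δ) * h0 ≤ sd p q) :
    ∃ V : Submodule (ZMod 2) G, Real.log (Nat.card V) ≤ 32768 * (M * h0 / δ ^ 2) ∧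
      δ * h0 ≤ E1 p - Hn p V.mkQ := by
  classical
  have hM0 : 0 < M := by linarith
  have hδ1 : δ ≤ 1 := by
    have := pow_le_pow_left₀ hη.le hη2 2
    linarith
  have hpp := cv_nonneg hp hp
  have hqq := cv_nonneg hq hq
  have hpq' := cv_nonneg hp hq
  have hqp := cv_nonneg hq hp
  have mpp : ms (cv p p) = 1 := by rw [ms_cv, mp, one_mul]
  have mqq : ms (cv q q) = 1 := by rw [ms_cv, mq, one_mul]
  have mpq : ms (cv p q) = 1 := by rw [ms_cv, mp, mq, one_mul]
  have mqp : ms (cv q p) = 1 := by rw [ms_cv, mp, mq, one_mul]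
  have b1 := sum_le hp hp
  have b2 := sum_le hq hq
  have b3 := sum_le hp hq
  rw [mp] at b1 b3
  rw [mq] at b2 b3
  have np : 0 ≤ E1 p := Hn_nonneg hp _
  have nq : 0 ≤ E1 q := Hn_nonneg hq _
  obtain ⟨V, hV⟩ := exists_min_sub (G := G)
    (fun V => Hn (cv p p) V.mkQ + Hn (cv p q) V.mkQ + δ / (2 * M) * Real.log (Nat.card V))
  have hV : ∀ W : Submodule (ZMod 2) G,
    Hn (cv p p) V.mkQ + Hn (cv p q) V.mkQ + δ / (2 * M) * Real.log (Nat.card V)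
      ≤ Hn (cv p p) W.mkQ + Hn (cv p q) W.mkQ + δ / (2 * M) * Real.log (Nat.card W) := hV
  have hV0 := hV ⊥
  rw [Hn_bot, Hn_bot, log_bot] at hV0
  have hlogV : Real.log (Nat.card V) ≤ 6 * (M * h0 / δ ^ 2) := by
    have n1 := Hn_nonneg hpp V.mkQ
    have n2 := Hn_nonneg hpq' V.mkQ
    have e1 : δ / (2 * M) * Real.log (Nat.card V) ≤ 3 * h0 := by linarith
    rw [div_mul_eq_mul_div, div_le_iff₀ (by positivity)] at e1
    rw [← mul_div_assoc, le_div_iff₀ (by positivity)]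
    have y0 : 0 ≤ δ * Real.log (Nat.card V) := mul_nonneg hδ.le (log_card_nonneg V)
    have y2 : δ * (δ * Real.log (Nat.card V)) ≤ 1 * (δ * Real.log (Nat.card V)) := by gcongr
    linarith
  have hX : 0 ≤ M * h0 / δ ^ 2 := by positivity
  by_cases hbig : δ * h0 ≤ E1 p - Hn p V.mkQ
  · exact ⟨V, by linarith, hbig⟩
  push Not at hbig
  have hθ : δ / (2 * M) * L ≤ δ / 2 := by
    rw [div_mul_eq_mul_div, div_le_div_iff₀ (by positivity) (by positivity)]
    have := mul_le_mul_of_nonneg_left hL hδ.le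
    linarith
  have hlam : 0 ≤ δ / (2 * M) := by positivity
  have P1 := pair_lemma hB hη.le hlam hθ hqq hpp V (by
    intro V' h
    have := Hn_mono hpq' (mkQ_mono h)
    have := hV V'
    rw [mpp, mul_one]
    linarith)
  have P2 := pair_lemma hB hη.le hlam hθ hqp hpq' V (by
    intro V' h
    have := Hn_mono hpp (mkQ_mono h)
    have := hV V'
    rw [mpq, mul_one]
    linarith)
  rw [mpp, mqq, one_mul, one_mul, sdV_comm] at P1
  rw [mpq, mqp, one_mul, one_mul, sdV_comm] at P2
  have c1 := Hn_le_E1 hpp V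
  have c2 := Hn_le_E1 hqq V
  have c3 := Hn_le_E1 hpq' V
  have c4 := Hn_le_E1 hqp V
  rw [cv_comm q p] at c4
  have s1 : δ * (Hn (cv q q) V.mkQ + Hn (cv p p) V.mkQ) ≤ δ * (2 * h0) := by gcongr; linarith
  have s2 : δ * (Hn (cv q p) V.mkQ + Hn (cv p q) V.mkQ) ≤ δ * (2 * h0) := by
    gcongr; rw [cv_comm q p]; linarith
  have hsV := sd_le_sdV hp hq V
  rw [mq, one_mul] at hsV
  letI := Fintype.ofFinite (G ⧸ V)
  obtain ⟨W, W1, W2⟩ := core (G := G ⧸ V) hB hη hη2 hδη hδ hL hM hh0 (p := pf V.mkQ p) (q := pf V.mkQ q)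
    (pf_nonneg _ hp) (pf_nonneg _ hq) (by rw [ms_pf, mp]) (by rw [ms_pf, mq])
    (by rw [E1_pf, E1_pf]; linarith [Hn_le_E1 hp V, Hn_le_E1 hq V])
    (by rw [sd_pf]; linarith)
    (by rw [pf_cv, pf_cv, sd_pf, E1_pf, E1_pf]; linarith)
    (by rw [pf_cv, pf_cv, sd_pf, E1_pf, E1_pf]; linarith)
  refine ⟨W.comap V.mkQ, ?_, ?_⟩
  · rw [log_card_comap V.mkQ V.mkQ_surjective, Submodule.ker_mkQ]
    linarith
  · rw [E1_pf, Hn_pf] at W2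
    have e := Hn_comap (A := Unit) V.mkQ W p (fun x => x)
    have e : Hn p (W.comap V.mkQ).mkQ = Hn p (fun x => W.mkQ (V.mkQ x)) := e
    rw [e]
    linarith [Hn_le_E1 hp V]

end final

theorem statement18 (η₀ L₀ : ℝ) (hη : η₀ ∈ Set.Ioc (0 : ℝ) (1 / 2)) (hL : 0 ≤ L₀)
    (hB : StB η₀ (((2 : ℝ) ^ 15)⁻¹ * η₀ ^ 2) L₀) :
    StA (η₀ - ((2 : ℝ) ^ 15)⁻¹ * η₀ ^ 2)
      (((2 : ℝ) ^ 15) ^ 3 * (η₀ ^ 4)⁻¹ * max L₀ 1)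
      (((2 : ℝ) ^ 15)⁻¹ * η₀ ^ 2) := by
  intro n p q hp hq hpq
  have hB' := brel hB
  obtain ⟨hη0, hη2⟩ := hη
  obtain ⟨np, mp⟩ := isDist_iff.1 hp
  obtain ⟨nq, mq⟩ := isDist_iff.1 hq
  rw [ent_conv mp mq, ent_eq mp, ent_eq mq] at hpq
  simp only [ent_unif, ent_push _ mp, ent_push _ mq, ent_eq mp, ent_eq mq]
  set δ : ℝ := ((2 : ℝ) ^ 15)⁻¹ * η₀ ^ 2 with hδdef
  have hδ : 0 < δ := by positivity
  have hδη : η₀ ^ 2 = 32768 * δ := by rw [hδdef]; ring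
  have hp0 : 0 ≤ E1 p := Hn_nonneg np _
  have hq0 : 0 ≤ E1 q := Hn_nonneg nq _
  rcases (add_nonneg hp0 hq0).eq_or_lt with h0 | h0
  · refine ⟨⊥, ?_, ?_⟩
    · rw [← h0, log_bot, mul_zero]
    · rw [← h0, Hn_bot, Hn_bot, ← h0, mul_zero]
  · obtain ⟨V, V1, V2⟩ := stageOne (M := max L₀ 1) hB' hη0 hη2 hδη hδ (le_max_left _ _) (le_max_right _ _) h0 np nq mp mq rfl
      (by unfold sd; rw [mp, mq]; linarith)
    refine ⟨V, V1.trans (le_of_eq ?_), ?_⟩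
    · rw [hδdef]; field_simp; norm_num
    · linarith [Hn_le_E1 nq V]
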